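/- arXiv:2304.10795 — 2 statements merged into one kernel-verified Lean document; each statement's English description precedes it below -/
import Mathlib

section
/- If Ŝ is a Neumann subgroup of M̂ = PGL(2,ℤ), then every element of order 2 of Ŝ belongs to M = PSL(2,ℤ); consequently, Ŝ is never an internal semidirect product of S = Ŝ ∩ M and a subgroup of order 2. -/
open Matrix Pointwise

noncomputable section

abbrev GL2Z := Matrix.GeneralLinearGroup (Fin 2) ℤ

/-- The subgroup {±I} of GL(2,ℤ), which is its center. -/
def pmI : Subgroup GL2Z := Subgroup.zpowers (-1)

instance pmI_normal : pmI.Normal := by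
  constructor
  rintro n hn g
  obtain ⟨k, hk⟩ := Subgroup.mem_zpowers_iff.mp hn
  have hc : Commute ((-1 : GL2Z) ^ k) g := (Commute.neg_one_left g).zpow_left k
  have : g * n * g⁻¹ = n := by
    rw [← hk, ← hc.eq]; group
  rw [this]; exact hn

/-- The extended modular group PGL(2,ℤ) = GL(2,ℤ)/{±I}. -/
abbrev Mhat := GL2Z ⧸ pmI

def pr : GL2Z →* Mhat := QuotientGroup.mk' pmI

def tauGL : GL2Z := ⟨!![1,1;0,1], !![1,-1;0,1], by decide, by decide⟩
def nuGL : GL2Z := ⟨!![-1,0;0,1], !![-1,0;0,1], by decide, by decide⟩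
def omegaGL : GL2Z := ⟨!![0,-1;1,0], !![0,1;-1,0], by decide, by decide⟩
def phiGL : GL2Z := ⟨!![0,-1;1,1], !![1,1;-1,0], by decide, by decide⟩

/-- τ, the class of [[1,1],[0,1]]. -/
def tau : Mhat := pr tauGL
/-- ν, the class of [[-1,0],[0,1]]. -/
def nu : Mhat := pr nuGL
/-- ω, the class of [[0,-1],[1,0]]. -/
def omega : Mhat := pr omegaGL
/-- φ, the class of [[0,-1],[1,1]]. -/
def phi : Mhat := pr phiGL

/-- T̂ = ⟨τ, ν⟩, the stabilizer of ∞. -/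
def That : Subgroup Mhat := Subgroup.closure {tau, nu}

/-- A Neumann subgroup of the extended modular group: a complement of T̂. -/
def IsNeumann (S : Subgroup Mhat) : Prop :=
  (S : Set Mhat) * (That : Set Mhat) = Set.univ ∧ S ⊓ That = ⊥

/-- The modular group PSL(2,ℤ), as the subgroup of PGL(2,ℤ) of classes of
matrices of determinant one. -/
def Msub : Subgroup Mhat :=
  Subgroup.map pr (MonoidHom.ker (Matrix.GeneralLinearGroup.det))

/-!
Let `g ∈ Ŝ` satisfy `g ^ 2 = 1` but lie outside `M`. A matrix `A` representing `g` has negative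
determinant and scalar square, which forces trace `0`, so `A` has eigenvalue `1`. Completing a
primitive integral eigenvector to a basis conjugates `A` to an upper triangular matrix, whose class
fixes `∞` and hence lies in `T̂`. But no conjugate of `Ŝ` meets its complement `T̂` nontrivially,
so `g = 1`, which does lie in `M`.
-/

open scoped MatrixGroups

lemma eq_one_of_isConj_of_isComplement' {G : Type*} [Group G] {S T : Subgroup G}
    (h : S.IsComplement' T) {s t : G} (hs : s ∈ S) (ht : t ∈ T) (hst : IsConj s t) : s = 1 := by
  obtain ⟨c, rfl⟩ := isConj_iff.mp hst
  obtain ⟨u, hu, r, hr, rfl⟩ : c ∈ (T : Set G) * S := h.symm.mul_eq ▸ Set.mem_univ c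
  have hrS : r * s * r⁻¹ ∈ S := S.mul_mem (S.mul_mem hr hs) (S.inv_mem hr)
  have hrT : r * s * r⁻¹ ∈ T := by
    convert T.mul_mem (T.mul_mem (T.inv_mem hu) ht) hu using 1
    group
  exact conj_eq_one_iff.mp (Subgroup.disjoint_def.mp h.disjoint hrS hrT)

lemma trace_eq_zero_of_sq_eq_smul_one_of_det_neg {R : Type*} [CommRing R] [LinearOrder R]
    [IsStrictOrderedRing R] {A : Matrix (Fin 2) (Fin 2) R} {c : R} (hA : A ^ 2 = c • 1)
    (hdet : A.det < 0) : A.trace = 0 := by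
  have cayley_hamilton : A.trace • A = (c + A.det) • (1 : Matrix (Fin 2) (Fin 2) R) := by
    have h := A.aeval_self_charpoly
    simp only [charpoly_fin_two, map_add, map_sub, map_mul, map_pow, Polynomial.aeval_X,
      Polynomial.aeval_C, Algebra.algebraMap_eq_smul_one, hA, smul_mul_assoc, one_mul] at h
    rwa [sub_add_eq_add_sub, ← add_smul, sub_eq_zero, eq_comm] at h
  have trace_sq_mul_det : A.trace ^ 2 * A.det = (c + A.det) ^ 2 := by
    simpa [det_smul] using congrArg det cayley_hamilton
  have trace_sq_nonpos : A.trace ^ 2 ≤ 0 :=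
    nonpos_of_mul_nonneg_left (trace_sq_mul_det ▸ sq_nonneg _) hdet
  exact (sq_nonpos_iff _).mp trace_sq_nonpos

section Bezout

variable {R : Type*} [CommRing R] [IsDomain R] [IsBezout R]

lemma exists_eq_smul_SL2_col (v : Fin 2 → R) :
    ∃ (d : R) (B : SL(2, R)), v = d • B.1.col 0 := by
  classical
  let := IsBezout.toGCDDomain R
  obtain ⟨p, r, hp, hr, hpr⟩ := extract_gcd (v 0) (v 1)
  obtain ⟨B, hB0, hB1⟩ := ((gcd_isUnit_iff p r).mp hpr).exists_SL2_col 0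
  refine ⟨gcd (v 0) (v 1), B, funext fun i ↦ ?_⟩
  fin_cases i
  · simpa [hB0] using hp
  · simpa [hB1] using hr

lemma exists_SL2_conj_apply_one_zero_eq_zero_of_isRoot {A : Matrix (Fin 2) (Fin 2) R} {μ : R}
    (hμ : A.charpoly.IsRoot μ) : ∃ B : SL(2, R), (B⁻¹.1 * A * B.1) 1 0 = 0 := by
  rw [Polynomial.IsRoot, eval_charpoly] at hμ
  obtain ⟨v, hv, hAv⟩ := exists_mulVec_eq_zero_iff.mpr hμ
  obtain ⟨d, B, rfl⟩ := exists_eq_smul_SL2_col v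
  have hd : d ≠ 0 := fun h ↦ hv (by simp [h])
  have eigen : A *ᵥ B.1.col 0 = μ • B.1.col 0 := by
    rw [mulVec_smul, smul_eq_zero_iff_right hd, sub_mulVec, sub_eq_zero] at hAv
    simpa using hAv.symm
  have conj_col : (B⁻¹.1 * A * B.1).col 0 = μ • Pi.single 0 1 := by
    have inv_mul : B⁻¹.1 * B.1 = 1 := congrArg Subtype.val (inv_mul_cancel B)
    rw [← mulVec_single_one, ← mulVec_mulVec, mulVec_single_one, ← mulVec_mulVec, eigen,
      mulVec_smul, ← mulVec_single_one B.1, mulVec_mulVec, inv_mul, one_mulVec]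
  exact ⟨B, by simpa using congrFun conj_col 1⟩

end Bezout

lemma pr_eq_one_iff {A : GL2Z} : pr A = 1 ↔ A = 1 ∨ A = -1 := by
  rw [pr, QuotientGroup.mk'_apply, QuotientGroup.eq_one_iff, pmI, Subgroup.mem_zpowers_iff]
  constructor
  · rintro ⟨k, rfl⟩
    exact k.even_or_odd.imp Even.neg_one_zpow Odd.neg_one_zpow
  · rintro (rfl | rfl)
    exacts [⟨0, zpow_zero _⟩, ⟨1, zpow_one _⟩]

lemma pr_neg (A : GL2Z) : pr (-A) = pr A := by
  rw [← neg_one_mul, map_mul, pr_eq_one_iff.mpr (.inr rfl), one_mul]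

lemma tauGL_zpow (n : ℤ) : tauGL ^ n = GeneralLinearGroup.upperRightHom n := by
  have : tauGL = GeneralLinearGroup.upperRightHom 1 := Units.ext rfl
  rw [this, ← AddChar.map_zsmul_eq_zpow, smul_eq_mul, mul_one]

lemma pr_mem_That_of_apply_one_zero_eq_zero {A : GL2Z} (hA : A 1 0 = 0) : pr A ∈ That := by
  have tau_zpow_mem (n : ℤ) : pr (tauGL ^ n) ∈ That := by
    rw [map_zpow]
    exact That.zpow_mem (Subgroup.subset_closure (.inl rfl)) n
  have nu_mem : pr nuGL ∈ That := Subgroup.subset_closure (.inr rfl)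
  have hunit : IsUnit (A 0 0 * A 1 1) := by
    simpa [det_fin_two, hA] using (isUnit_iff_isUnit_det A.1).mp A.isUnit
  wlog h11 : A 1 1 = 1 generalizing A
  · have h11' := (Int.isUnit_iff.mp (isUnit_of_mul_isUnit_right hunit)).resolve_left h11
    rw [← pr_neg]
    exact this (by simp [hA]) (by simpa using hunit) (by simp [h11'])
  rw [h11, mul_one] at hunit
  rcases Int.isUnit_iff.mp hunit with h00 | h00
  · have : A = tauGL ^ A 0 1 := by
      rw [tauGL_zpow]
      ext i j
      fin_cases i <;> fin_cases j <;> simp [*]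
    exact this ▸ tau_zpow_mem _
  · have : A = tauGL ^ A 0 1 * nuGL := by
      rw [tauGL_zpow]
      ext i j
      fin_cases i <;> fin_cases j <;> simp [nuGL, *]
    rw [this, map_mul]
    exact That.mul_mem (tau_zpow_mem _) nu_mem

lemma exists_mem_That_isConj_of_sq_eq_one_of_notMem_Msub {g : Mhat} (hg : g ^ 2 = 1)
    (hM : g ∉ Msub) : ∃ t ∈ That, IsConj g t := by
  obtain ⟨A, rfl⟩ := QuotientGroup.mk'_surjective pmI g
  have hdet : A.1.det = -1 := by
    have hA : GeneralLinearGroup.det A ≠ 1 := fun h ↦ hM ⟨A, h, rfl⟩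
    exact congrArg Units.val ((Int.units_eq_one_or _).resolve_left hA)
  have htrace : A.1.trace = 0 := by
    obtain ⟨c, hc⟩ : ∃ c : ℤ, A.1 ^ 2 = c • 1 := by
      rcases pr_eq_one_iff.mp ((map_pow pr A 2).trans hg) with h | h
      · exact ⟨1, by simpa using congrArg Units.val h⟩
      · exact ⟨-1, by simpa using congrArg Units.val h⟩
    exact trace_eq_zero_of_sq_eq_smul_one_of_det_neg hc (by simp [hdet])
  have hroot : A.1.charpoly.IsRoot 1 := by simp [charpoly_fin_two, hdet, htrace]
  obtain ⟨B, hB⟩ := exists_SL2_conj_apply_one_zero_eq_zero_of_isRoot hroot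
  let C : GL2Z := B
  refine ⟨pr (C⁻¹ * A * C), pr_mem_That_of_apply_one_zero_eq_zero hB, pr.map_isConj ?_⟩
  exact isConj_iff.mpr ⟨C⁻¹, by simp⟩

namespace IsNeumann

variable {Shat : Subgroup Mhat}

lemma isComplement' (hN : IsNeumann Shat) : Shat.IsComplement' That :=
  Subgroup.isComplement'_of_disjoint_and_mul_eq_univ (disjoint_iff.mpr hN.2) hN.1

lemma mem_Msub_of_sq_eq_one (hN : IsNeumann Shat) {g : Mhat} (hg : g ∈ Shat) (hsq : g ^ 2 = 1) :
    g ∈ Msub := by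
  by_contra hM
  obtain ⟨t, ht, hgt⟩ := exists_mem_That_isConj_of_sq_eq_one_of_notMem_Msub hsq hM
  exact hM (eq_one_of_isConj_of_isComplement' hN.isComplement' hg ht hgt ▸ Msub.one_mem)

lemma le_Msub_of_card_eq_two (hN : IsNeumann Shat) {K : Subgroup Mhat} (hK : K ≤ Shat)
    (hcard : Nat.card K = 2) : K ≤ Msub := fun g hg ↦
  hN.mem_Msub_of_sq_eq_one (hK hg) <| by
    simpa [hcard] using congrArg Subtype.val (pow_card_eq_one' (x := (⟨g, hg⟩ : K)))

end IsNeumann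

/-- If Ŝ is a Neumann subgroup of M̂ = PGL(2,ℤ), then every
element of order 2 of Ŝ lies in M = PSL(2,ℤ); consequently Ŝ is never an
internal semidirect product of S = Ŝ ∩ M and a subgroup of order 2. -/
theorem neumann_no_semidirect_complement_of_order_two
    (Shat : Subgroup Mhat) (hN : IsNeumann Shat) :
    (∀ g ∈ Shat, orderOf g = 2 → g ∈ Msub) ∧
    ¬ ∃ K : Subgroup Mhat, K ≤ Shat ∧ Nat.card K = 2 ∧
        K ⊓ (Shat ⊓ Msub) = ⊥ ∧ K ⊔ (Shat ⊓ Msub) = Shat := by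
  refine ⟨fun g hg ho ↦ hN.mem_Msub_of_sq_eq_one hg (orderOf_eq_prime_iff.mp ho).1, ?_⟩
  rintro ⟨K, hK, hcard, hbot, -⟩
  rw [inf_eq_left.mpr (le_inf hK (hN.le_Msub_of_card_eq_two hK hcard))] at hbot
  simp [hbot] at hcard
end
end

section
/- If Ŝ is a Neumann subgroup of M̂ = PGL(2,ℤ) not contained in M = PSL(2,ℤ), then Ŝ is isomorphic to a free product of infinitely many groups, each of which is cyclic of order 2, cyclic of order 3, or infinite cyclic. -/
open Matrix Pointwise

noncomputable section

/-!
The involution `σ : z ↦ 1 / z̄` and the rotations `ω`, `φ` generate dihedral groups of orders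
four and six, and ping-pong on positive definite binary quadratic forms shows that `M̂` is their
amalgam over `⟨σ⟩`. A Neumann subgroup `S` is a point stabilizer of the transitive action of
`M̂` on `X = M̂ ⧸ S`, on which `T̂` acts simply transitively. As `σ` is conjugate into `T̂`, it
has no fixed point in `X`, so in the Bass–Serre decomposition of `S` (Karrass and Solitar) the
edge groups are trivial and every vertex group embeds in `⟨ω⟩` or `⟨φ⟩`; hence `S` is a free
product of copies of `ℤ/2`, `ℤ/3` and `ℤ`.

If only finitely many factors occurred, then reading off paths in a spanning tree would give a
map `X → M̂` which is equivariant up to finitely many points for each element of `M̂`. Since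
`T̂` is transitive and `T̂ ∩ ω⁻¹ T̂ ω` is finite, this would force `X` to be finite, whereas
`T̂` is infinite.
-/

/-! ### Amalgamated free products -/

section Amalgam

variable {G ι : Type*} [Group G] {H : ι → Subgroup G} {C : Subgroup G}

/-- The comparison homomorphism to `G` from the pushout of subgroups `H i` of `G` along a common
subgroup `C`. -/
def amalgamHom (le : ∀ i, C ≤ H i) :
    Monoid.PushoutI (fun i => Subgroup.inclusion (le i)) →* G :=
  Monoid.PushoutI.lift (fun i => (H i).subtype) C.subtype fun _ => rfl

variable (H C) in
/-- `G` is the amalgamated free product of its subgroups `H i` along their common subgroup `C`. -/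
structure IsAmalgam : Prop where
  le : ∀ i, C ≤ H i
  bijective : Function.Bijective (amalgamHom le)

theorem amalgamHom_of (le : ∀ i, C ≤ H i) (i : ι) (h : H i) :
    amalgamHom le (Monoid.PushoutI.of i h) = h :=
  Monoid.PushoutI.lift_of (fun i => (H i).subtype) C.subtype (fun _ => rfl) h

theorem amalgamHom_base (le : ∀ i, C ≤ H i) (c : C) :
    amalgamHom le (Monoid.PushoutI.base _ c) = c :=
  Monoid.PushoutI.lift_base (fun i => (H i).subtype) C.subtype (fun _ => rfl) c

theorem amalgamHom_surjective (le : ∀ i, C ≤ H i) (top_le : ⊤ ≤ ⨆ i, H i) :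
    Function.Surjective (amalgamHom le) := by
  rw [← MonoidHom.range_eq_top, ← top_le_iff]
  exact top_le.trans (iSup_le fun i h hh => ⟨Monoid.PushoutI.of i ⟨h, hh⟩, amalgamHom_of le i _⟩)

theorem IsAmalgam.induction_on (hG : IsAmalgam H C) {motive : G → Prop} (g : G)
    (of : ∀ i, ∀ h : H i, motive h) (base : ∀ c : C, motive c)
    (mul : ∀ x y, motive x → motive y → motive (x * y)) : motive g := by
  obtain ⟨x, rfl⟩ := hG.bijective.2 g
  induction x using Monoid.PushoutI.induction_on with
  | of i h => rw [amalgamHom_of]; exact of i h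
  | base c => rw [amalgamHom_base]; exact base c
  | mul x y hx hy => rw [map_mul]; exact mul _ _ hx hy

theorem IsAmalgam.exists_lift (hG : IsAmalgam H C) {K : Type*} [Monoid K] (f : ∀ i, H i →* K)
    (f₀ : C →* K) (hf : ∀ i, (f i).comp (Subgroup.inclusion (hG.le i)) = f₀) :
    ∃ F : G →* K, (∀ i, ∀ h : H i, F h = f i h) ∧ ∀ c : C, F c = f₀ c := by
  let e := MulEquiv.ofBijective _ hG.bijective
  have e_symm_of (i) (h : H i) : e.symm h = Monoid.PushoutI.of i h :=
    e.symm_apply_eq.2 (amalgamHom_of hG.le i h).symm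
  have e_symm_base (c : C) : e.symm c = Monoid.PushoutI.base _ c :=
    e.symm_apply_eq.2 (amalgamHom_base hG.le c).symm
  refine ⟨(Monoid.PushoutI.lift f f₀ hf).comp e.symm.toMonoidHom, fun i h => ?_, fun c => ?_⟩
  · simp [e_symm_of]
  · simp [e_symm_base]

variable {Ω : Type*} [MulAction G Ω] {U : ι → Set Ω} {p : Ω}

theorem amalgamHom_normalWord_smul_mem (le : ∀ i, C ≤ H i)
    {d : Monoid.PushoutI.NormalWord.Transversal fun i => Subgroup.inclusion (le i)}
    (smul_base : ∀ i, ∀ h ∈ H i, h ∉ C → h • p ∈ U i)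
    (smul_step : ∀ i j, i ≠ j → ∀ h ∈ H i, h ∉ C → ∀ x ∈ U j, h • x ∈ U i)
    (w : Monoid.PushoutI.NormalWord d) (i : ι) (hi : w.fstIdx = some i) (c : C) :
    (c * amalgamHom le w.prod) • p ∈ U i := by
  classical
  induction w using Monoid.PushoutI.NormalWord.consRecOn generalizing i c with
  | empty => simp [Monoid.CoprodI.Word.fstIdx] at hi
  | cons k g w hw _ hg hhead ih =>
    obtain rfl : k = i := by simpa [Monoid.CoprodI.Word.fstIdx] using hi
    have hcg : (c * g : G) ∉ C := fun h =>
      hg ⟨⟨g, (C.mul_mem_cancel_left c.2).1 h⟩, rfl⟩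
    have hcg' : (c * g : G) ∈ H k := mul_mem (le k c.2) g.2
    rw [Monoid.PushoutI.NormalWord.prod_cons, map_mul, amalgamHom_of, ← mul_assoc, mul_smul]
    cases hj : w.fstIdx with
    | none =>
      have hnil : w.toWord = .empty := by
        ext1
        simpa [Monoid.CoprodI.Word.fstIdx] using hj
      simpa [Monoid.PushoutI.NormalWord.prod, hnil, hhead] using smul_base k _ hcg' hcg
    | some j =>
      refine smul_step k j (fun hkj => hw (hkj ▸ hj)) _ hcg' hcg _ ?_
      simpa using ih j hj 1
  | base b w _ ih =>
    rw [Monoid.PushoutI.NormalWord.base_smul_eq_smul] at hi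
    rw [Monoid.PushoutI.NormalWord.prod_smul, map_mul, amalgamHom_base, ← mul_assoc]
    exact ih i hi (c * b)

theorem isAmalgam_of_pingPong (le : ∀ i, C ≤ H i) (top_le : ⊤ ≤ ⨆ i, H i)
    (base_notMem : ∀ i, p ∉ U i) (smul_base : ∀ i, ∀ h ∈ H i, h ∉ C → h • p ∈ U i)
    (smul_step : ∀ i j, i ≠ j → ∀ h ∈ H i, h ∉ C → ∀ x ∈ U j, h • x ∈ U i) :
    IsAmalgam H C := by
  classical
  refine ⟨le, (injective_iff_map_eq_one _).2 fun x hx => ?_, amalgamHom_surjective le top_le⟩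
  obtain ⟨d⟩ := Monoid.PushoutI.NormalWord.transversal_nonempty
    (fun i => Subgroup.inclusion (le i)) fun i => Subgroup.inclusion_injective (le i)
  obtain ⟨w, rfl⟩ : ∃ w : Monoid.PushoutI.NormalWord d, w.prod = x :=
    Monoid.PushoutI.NormalWord.equiv.symm.surjective x
  cases hi : w.fstIdx with
  | some i =>
    refine (base_notMem i ?_).elim
    simpa [hx] using amalgamHom_normalWord_smul_mem le smul_base smul_step w i hi 1
  | none =>
    have hnil : w.toWord = .empty := by
      ext1
      simpa [Monoid.CoprodI.Word.fstIdx] using hi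
    have hprod : w.prod = Monoid.PushoutI.base _ w.head := by
      simp [Monoid.PushoutI.NormalWord.prod, hnil]
    rw [hprod, amalgamHom_base, OneMemClass.coe_eq_one] at hx
    rw [hprod, hx, map_one]

end Amalgam

/-! ### Cocycles -/

section Cocycle

variable {G P Q : Type*} [Group G] [Group P] [MulAction G Q]

/-- `κ` is a 1-cocycle for the action of `G` on `Q` with values in `P`. -/
def IsCocycle (κ : G → Q → P) : Prop :=
  ∀ g h q, κ (g * h) q = κ g (h • q) * κ h q

theorem IsCocycle.one {κ : G → Q → P} (hκ : IsCocycle κ) (q : Q) : κ 1 q = 1 := by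
  simpa using hκ 1 1 q

theorem IsCocycle.inv_smul {κ : G → Q → P} (hκ : IsCocycle κ) (g : G) (q : Q) :
    κ g⁻¹ (g • q) = (κ g q)⁻¹ :=
  eq_inv_of_mul_eq_one_left <| by rw [← hκ, inv_mul_cancel, hκ.one]

theorem wreath_mul_left (x y : (Q → P) ⋊[mulAutArrow] G) (q : Q) :
    (x * y).left q = x.left q * y.left (x.right⁻¹ • q) :=
  rfl

/-- The homomorphism to the permutational wreath product of `P` and `G` defined by a cocycle on a
group mapping to `G`. -/
def wreathHom {K : Type*} [Group K] (f : K →* G) (κ : K → Q → P)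
    (hκ : ∀ k l q, κ (k * l) q = κ k (f l • q) * κ l q) :
    K →* (Q → P) ⋊[mulAutArrow] G :=
  MonoidHom.mk' (fun k => ⟨fun q => κ k ((f k)⁻¹ • q), f k⟩) fun k l =>
    SemidirectProduct.ext
      (funext fun q => by
        rw [wreath_mul_left]
        simp only [map_mul, hκ, _root_.mul_inv_rev, mul_smul, smul_inv_smul])
      (map_mul f k l)

/-- Cocycles correspond to homomorphic sections of the wreath product, and the amalgam has the
universal property for homomorphisms. -/
theorem IsAmalgam.exists_isCocycle {ι : Type*} {H : ι → Subgroup G} {C : Subgroup G}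
    (hG : IsAmalgam H C) (κ : ∀ i, H i → Q → P) (hκ : ∀ i, IsCocycle (κ i))
    (hC : ∀ i, ∀ h : H i, (h : G) ∈ C → ∀ q, κ i h q = 1) :
    ∃ κ' : G → Q → P, IsCocycle κ' ∧ (∀ i, ∀ h : H i, κ' h = κ i h) ∧ ∀ c : C, κ' c = 1 := by
  obtain ⟨Ψ, hΨ, hΨC⟩ := hG.exists_lift (fun i => wreathHom (H i).subtype (κ i) (hκ i))
    (SemidirectProduct.inr.comp C.subtype) fun i => MonoidHom.ext fun c =>
      SemidirectProduct.ext (funext fun q => hC i _ c.2 _) rfl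
  have right_Ψ (g : G) : (Ψ g).right = g := by
    induction g using hG.induction_on with
    | of i h => rw [hΨ]; rfl
    | base c => rw [hΨC]; rfl
    | mul x y hx hy => rw [map_mul, SemidirectProduct.mul_right, hx, hy]
  refine ⟨fun g q => (Ψ g).left (g • q), fun g h q => ?_, fun i h => funext fun q => ?_,
    fun c => ?_⟩
  · simp only [map_mul, wreath_mul_left, right_Ψ, mul_smul, inv_smul_smul]
  · simp only [hΨ]
    exact congrArg (κ i h) (inv_smul_smul _ q)
  · simp only [hΨC]
    rfl

end Cocycle

/-! ### Stabilizers in amalgams -/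

section Schreier

open MulAction

variable {G ι Q : Type*} [Group G] [MulAction G Q]

theorem finite_setOf_orbitRel_mk_mem (K : Subgroup G) [Finite K] {s : Set (orbitRel.Quotient K Q)}
    (hs : s.Finite) : {q : Q | ⟦q⟧ ∈ s}.Finite :=
  hs.preimage' fun o _ => by
    induction o using Quotient.inductionOn with
    | h q =>
      refine (Set.finite_range fun k : K => k • q).subset fun q' hq' => ?_
      exact Quotient.exact hq'

theorem orbitRel_mk_smul {K : Subgroup G} {k : G} (hk : k ∈ K) (q : Q) :
    (⟦k • q⟧ : orbitRel.Quotient K Q) = ⟦q⟧ :=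
  Quotient.sound ⟨⟨k, hk⟩, rfl⟩

/-- A spanning tree, rooted at the edge `C • q₀`, of the graph whose vertices are the `H i`-orbits
on `Q` and whose edges are the `C`-orbits of pairs `(i, q)`, together with transversals along it:
`rep` selects a point in each vertex, `coset i q` moves the selected point to `q`, and `path q`
moves `q₀` to `q`. The tree is encoded by `path_eq`, whose recursion ends because `depth`
decreases. -/
structure SchreierData (H : ι → Subgroup G) (C : Subgroup G) (q₀ : Q) where
  depth : Q → ℕ
  rep : ∀ i, orbitRel.Quotient (H i) Q → Q
  coset : ∀ i, Q → H i
  path : Q → G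
  coset_smul_rep : ∀ i q, coset i q • rep i ⟦q⟧ = q
  coset_rep : ∀ i o, coset i (rep i o) = 1
  coset_smul : ∀ i, ∀ c : C, ∀ q, (coset i (c • q) : G) = c * coset i q
  path_smul : ∀ c : C, ∀ q, path (c • q) = c * path q
  path_base : path q₀ = 1
  path_eq : ∀ q, q ∈ orbit C q₀ ∨
    ∃ i, depth (rep i ⟦q⟧) < depth q ∧ path q = coset i q * path (rep i ⟦q⟧)

namespace SchreierData

variable {H : ι → Subgroup G} {C : Subgroup G} {q₀ : Q}

theorem le (D : SchreierData H C q₀) (i : ι) : C ≤ H i := fun c hc =>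
  ((H i).mul_mem_cancel_right (SetLike.coe_mem _)).1
    (D.coset_smul i ⟨c, hc⟩ q₀ ▸ SetLike.coe_mem _)

variable (D : SchreierData H C q₀)

theorem mk_rep (i : ι) (o : orbitRel.Quotient (H i) Q) :
    (⟦D.rep i o⟧ : orbitRel.Quotient (H i) Q) = o := by
  induction o using Quotient.inductionOn with
  | h q => exact Quotient.sound ⟨(D.coset i q)⁻¹, inv_smul_eq_iff.2 (D.coset_smul_rep i q).symm⟩

theorem path_induction {motive : Q → Prop} (base : ∀ c : C, motive (c • q₀))
    (step : ∀ i q, D.path q = D.coset i q * D.path (D.rep i ⟦q⟧) → motive (D.rep i ⟦q⟧) →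
      motive q) (q : Q) : motive q := by
  induction q using (measure D.depth).wf.induction with
  | h q ih =>
    obtain ⟨c, rfl⟩ | ⟨i, hlt, heq⟩ := D.path_eq q
    · exact base c
    · exact step i q heq (ih _ hlt)

theorem path_smul_base (q : Q) : D.path q • q₀ = q := by
  induction q using D.path_induction with
  | base c => rw [D.path_smul, D.path_base, mul_one, Subgroup.smul_def]
  | step i q heq ih => rw [heq, mul_smul, ih, ← Subgroup.smul_def, D.coset_smul_rep]

theorem path_injective : Function.Injective D.path := fun q q' h => by
  rw [← D.path_smul_base q, h, D.path_smul_base]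

/-- The element of the stabilizer of `q₀` carried by the edge `(i, C • q)`: go along the tree to
`q`, and return to `q₀` through the selected point of the vertex `H i • q`. It is trivial along the
edges of the tree. -/
def label (i : ι) : orbitRel.Quotient C Q → G :=
  Quotient.lift (fun q => (D.coset i q * D.path (D.rep i ⟦q⟧))⁻¹ * D.path q) <| by
    rintro _ q ⟨c, rfl⟩
    have hrep : (⟦c • q⟧ : orbitRel.Quotient (H i) Q) = ⟦q⟧ := orbitRel_mk_smul (D.le i c.2) q
    simp only [hrep, D.coset_smul, D.path_smul]
    group

/-- The edges with nontrivial label; they form a basis of the free factor of the stabilizer. -/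
abbrev Loop : Type _ :=
  {e : ι × orbitRel.Quotient C Q // D.label e.1 e.2 ≠ 1}

/-- The vertices of the graph underlying `SchreierData`. -/
abbrev Vertex (H : ι → Subgroup G) (Q : Type*) [MulAction G Q] : Type _ :=
  Σ i, orbitRel.Quotient (H i) Q

/-- The group attached to a vertex: the stabilizer of its selected point. -/
abbrev vertexGroup (v : Vertex H Q) : Subgroup (H v.1) :=
  stabilizer (H v.1) (D.rep v.1 v.2)

/-- The free product of all vertex groups and a free group on the loops. -/
abbrev FreeProduct : Type _ :=
  Monoid.Coprod (Monoid.CoprodI fun v => D.vertexGroup v) (FreeGroup D.Loop)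

/-- The inclusion of a vertex group in the free product. -/
def vertexHom (i : ι) (o : orbitRel.Quotient (H i) Q) :
    stabilizer (H i) (D.rep i o) →* D.FreeProduct :=
  Monoid.Coprod.inl.comp (Monoid.CoprodI.of (M := fun v => D.vertexGroup v) (i := ⟨i, o⟩))

open Classical in
/-- The element of the free product given by an edge, trivial unless the edge is a loop. -/
def edge (i : ι) (o : orbitRel.Quotient C Q) : D.FreeProduct :=
  if h : D.label i o = 1 then 1 else Monoid.Coprod.inr (FreeGroup.of ⟨(i, o), h⟩)

/-- The homomorphism to `G` sending loops to their labels and conjugating vertex groups along the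
tree to the stabilizer of `q₀`. -/
def eval : D.FreeProduct →* G :=
  Monoid.Coprod.lift
    (Monoid.CoprodI.lift fun v => (MulAut.conj (D.path (D.rep v.1 v.2))⁻¹).toMonoidHom.comp
      ((H v.1).subtype.comp (D.vertexGroup v).subtype))
    (FreeGroup.lift fun e => D.label e.1.1 e.1.2)

theorem eval_vertexHom (i : ι) (o : orbitRel.Quotient (H i) Q)
    (k : stabilizer (H i) (D.rep i o)) :
    D.eval (D.vertexHom i o k) = (D.path (D.rep i o))⁻¹ * k * D.path (D.rep i o) := by
  simp [eval, vertexHom]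

theorem eval_edge (i : ι) (o : orbitRel.Quotient C Q) : D.eval (D.edge i o) = D.label i o := by
  unfold edge
  split_ifs with h
  · rw [map_one, h]
  · simp [eval]

theorem vertexHom_congr {i : ι} {o o' : orbitRel.Quotient (H i) Q} (ho : o = o')
    (k : stabilizer (H i) (D.rep i o)) (k' : stabilizer (H i) (D.rep i o'))
    (hk : (k : H i) = k') : D.vertexHom i o k = D.vertexHom i o' k' := by
  subst ho
  rw [Subtype.ext hk]

theorem coset_stabilizes (i : ι) (h : H i) (q : Q) :
    (D.coset i (h • q))⁻¹ * h * D.coset i q ∈ stabilizer (H i) (D.rep i ⟦q⟧) := by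
  have hrep : (⟦h • q⟧ : orbitRel.Quotient (H i) Q) = ⟦q⟧ := orbitRel_mk_smul h.2 q
  rw [mem_stabilizer_iff, mul_smul, mul_smul, D.coset_smul_rep, inv_smul_eq_iff, ← hrep,
    D.coset_smul_rep]

/-- The contribution of the vertex `H i • q` to the cocycle: `h`, read in the vertex group through
`coset`. -/
def vertexPart (i : ι) (h : H i) (q : Q) : D.FreeProduct :=
  D.vertexHom i ⟦q⟧ ⟨_, D.coset_stabilizes i h q⟩

theorem isCocycle_vertexPart (i : ι) : IsCocycle (D.vertexPart i) := fun g h q => by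
  have hrep : (⟦h • q⟧ : orbitRel.Quotient (H i) Q) = ⟦q⟧ := orbitRel_mk_smul h.2 q
  rw [vertexPart, vertexPart, vertexPart,
    D.vertexHom_congr hrep _ ⟨_, hrep ▸ D.coset_stabilizes i g (h • q)⟩ rfl, ← map_mul]
  congr 2
  simp only [mul_smul]
  group

theorem vertexPart_eq_one {i : ι} {h : H i} {q : Q}
    (hcoset : h * D.coset i q = D.coset i (h • q)) : D.vertexPart i h q = 1 := by
  rw [← map_one (D.vertexHom i ⟦q⟧), vertexPart]
  congr 2
  rw [mul_assoc, hcoset, inv_mul_cancel]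

/-- The restriction to `H i` of the universal cocycle. -/
def localCocycle (i : ι) (h : H i) (q : Q) : D.FreeProduct :=
  (D.edge i ⟦h • q⟧)⁻¹ * D.vertexPart i h q * D.edge i ⟦q⟧

theorem isCocycle_localCocycle (i : ι) : IsCocycle (D.localCocycle i) := fun g h q => by
  simp only [localCocycle, D.isCocycle_vertexPart i g h q, mul_smul]
  group

theorem localCocycle_eq_one_of_mem (i : ι) (h : H i) (hh : (h : G) ∈ C) (q : Q) :
    D.localCocycle i h q = 1 := by
  have hedge : (⟦h • q⟧ : orbitRel.Quotient C Q) = ⟦q⟧ := orbitRel_mk_smul hh q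
  have hcoset : h * D.coset i q = D.coset i (h • q) :=
    Subtype.ext (D.coset_smul i ⟨h, hh⟩ q).symm
  rw [localCocycle, D.vertexPart_eq_one hcoset, hedge, mul_one, inv_mul_cancel]

theorem path_smul_mul_eval_localCocycle (i : ι) (h : H i) (q : Q) :
    D.path (h • q) * D.eval (D.localCocycle i h q) = h * D.path q := by
  have hrep : (⟦h • q⟧ : orbitRel.Quotient (H i) Q) = ⟦q⟧ := orbitRel_mk_smul h.2 q
  simp only [localCocycle, vertexPart, map_mul, map_inv, eval_edge, eval_vertexHom, label,
    Quotient.lift_mk, hrep, Subgroup.coe_mul, Subgroup.coe_inv]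
  group

theorem label_eq_one_of_path_eq {i : ι} {q : Q}
    (hq : D.path q = D.coset i q * D.path (D.rep i ⟦q⟧)) : D.label i ⟦q⟧ = 1 :=
  inv_mul_eq_one.2 hq.symm

theorem edge_eq_one {i : ι} {o : orbitRel.Quotient C Q} (ho : D.label i o = 1) :
    D.edge i o = 1 :=
  dif_pos ho

theorem edge_rep (i : ι) (o : orbitRel.Quotient (H i) Q) : D.edge i ⟦D.rep i o⟧ = 1 :=
  D.edge_eq_one <| D.label_eq_one_of_path_eq <| by
    rw [D.coset_rep, D.mk_rep, Subgroup.coe_one, one_mul]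

theorem edge_of_loop (e : D.Loop) :
    D.edge e.1.1 e.1.2 = Monoid.Coprod.inr (FreeGroup.of e) :=
  dif_neg e.2

theorem freeProduct_induction {motive : D.FreeProduct → Prop} (p : D.FreeProduct)
    (vertex : ∀ i o k, motive (D.vertexHom i o k)) (edge : ∀ i o, motive (D.edge i o))
    (one : motive 1) (inv : ∀ x, motive x → motive x⁻¹)
    (mul : ∀ x y, motive x → motive y → motive (x * y)) : motive p := by
  have loop (e : D.Loop) : motive (Monoid.Coprod.inr (FreeGroup.of e)) :=
    D.edge_of_loop e ▸ edge _ _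
  induction p using Monoid.Coprod.induction_on with
  | inl x =>
    induction x using Monoid.CoprodI.induction_on with
    | one => simpa only [map_one] using one
    | of v k => exact vertex v.1 v.2 k
    | mul x y hx hy => simpa only [map_mul] using mul _ _ hx hy
  | inr x =>
    induction x using FreeGroup.induction_on with
    | C1 => simpa only [map_one] using one
    | of e => exact loop e
    | inv_of e he => simpa only [map_inv] using inv _ he
    | mul x y hx hy => simpa only [map_mul] using mul _ _ hx hy
  | mul x y hx hy => exact mul x y hx hy

theorem eval_mem_stabilizer (p : D.FreeProduct) : D.eval p ∈ stabilizer G q₀ := by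
  induction p using D.freeProduct_induction with
  | one => rw [map_one]; exact one_mem _
  | inv x hx => rw [map_inv]; exact inv_mem hx
  | mul x y hx hy => rw [map_mul]; exact mul_mem hx hy
  | vertex i o k =>
    have hk : (k : H i) • D.rep i o = D.rep i o := k.2
    rw [mem_stabilizer_iff, D.eval_vertexHom, mul_smul, mul_smul, D.path_smul_base,
      ← Subgroup.smul_def, hk, inv_smul_eq_iff, D.path_smul_base]
  | edge i o =>
    induction o using Quotient.inductionOn with
    | h q =>
      rw [mem_stabilizer_iff, D.eval_edge, label, Quotient.lift_mk, mul_smul, D.path_smul_base,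
        inv_smul_eq_iff, mul_smul, D.path_smul_base]
      exact (D.coset_smul_rep i q).symm

/-- A cocycle extending the local ones. -/
structure IsUniversalCocycle (κ : G → Q → D.FreeProduct) : Prop where
  isCocycle : IsCocycle κ
  apply_of : ∀ i, ∀ h : H i, κ h = D.localCocycle i h
  apply_base : ∀ c : C, κ c = 1

variable {D} {κ : G → Q → D.FreeProduct}

namespace IsUniversalCocycle

theorem path_smul_mul_eval (hκ : D.IsUniversalCocycle κ) (hG : IsAmalgam H C) (g : G) (q : Q) :
    D.path (g • q) * D.eval (κ g q) = g * D.path q := by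
  induction g using hG.induction_on generalizing q with
  | of i h => rw [hκ.apply_of]; exact D.path_smul_mul_eval_localCocycle i h q
  | base c => rw [hκ.apply_base, Pi.one_apply, map_one, mul_one]; exact D.path_smul c q
  | mul x y hx hy =>
    rw [hκ.isCocycle, map_mul, mul_smul, ← mul_assoc, hx, mul_assoc, hy, mul_assoc]

theorem apply_coset (hκ : D.IsUniversalCocycle κ) (i : ι) (q : Q) :
    κ (D.coset i q) (D.rep i ⟦q⟧) = (D.edge i ⟦q⟧)⁻¹ := by
  have hcoset : D.coset i q * D.coset i (D.rep i ⟦q⟧) =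
      D.coset i (D.coset i q • D.rep i ⟦q⟧) := by
    rw [D.coset_rep, mul_one, D.coset_smul_rep]
  rw [hκ.apply_of, localCocycle, D.vertexPart_eq_one hcoset, D.coset_smul_rep, D.edge_rep,
    mul_one, mul_one]

theorem apply_path (hκ : D.IsUniversalCocycle κ) (q : Q) : κ (D.path q) q₀ = 1 := by
  induction q using D.path_induction with
  | base c => rw [D.path_smul, D.path_base, mul_one, hκ.apply_base, Pi.one_apply]
  | step i q heq ih =>
    rw [heq, hκ.isCocycle, ih, D.path_smul_base, hκ.apply_coset,
      D.edge_eq_one (D.label_eq_one_of_path_eq heq), inv_one, mul_one]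

theorem apply_path_inv (hκ : D.IsUniversalCocycle κ) (q : Q) : κ (D.path q)⁻¹ q = 1 := by
  have h := hκ.isCocycle.inv_smul (D.path q) q₀
  rwa [D.path_smul_base, hκ.apply_path, inv_one] at h

theorem apply_label (hκ : D.IsUniversalCocycle κ) (i : ι) (o : orbitRel.Quotient C Q) :
    κ (D.label i o) q₀ = D.edge i o := by
  induction o using Quotient.inductionOn with
  | h q =>
    have hcoset : κ (D.coset i q)⁻¹ q = D.edge i ⟦q⟧ := by
      have h := hκ.isCocycle.inv_smul (D.coset i q : G) (D.rep i ⟦q⟧)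
      rwa [← Subgroup.smul_def, D.coset_smul_rep, hκ.apply_coset, inv_inv] at h
    have hsmul : (D.coset i q : G)⁻¹ • q = D.rep i ⟦q⟧ :=
      inv_smul_eq_iff.2 (D.coset_smul_rep i q).symm
    rw [label, Quotient.lift_mk, _root_.mul_inv_rev, hκ.isCocycle, hκ.isCocycle,
      D.path_smul_base, hκ.apply_path, hsmul, hκ.apply_path_inv, hcoset, mul_one, one_mul]

theorem apply_eval_vertexHom (hκ : D.IsUniversalCocycle κ) (i : ι)
    (o : orbitRel.Quotient (H i) Q) (k : stabilizer (H i) (D.rep i o)) :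
    κ (D.eval (D.vertexHom i o k)) q₀ = D.vertexHom i o k := by
  have hsmul : (k : H i) • D.rep i o = D.rep i o := k.2
  have hk : κ (k : H i) (D.rep i o) = D.vertexHom i o k := by
    rw [hκ.apply_of, localCocycle, hsmul, D.edge_rep, mul_one, inv_one, one_mul]
    refine D.vertexHom_congr (D.mk_rep i o) _ _ ?_
    simp only [hsmul, D.coset_rep, inv_one, one_mul, mul_one]
  rw [D.eval_vertexHom, hκ.isCocycle, hκ.isCocycle, D.path_smul_base, ← Subgroup.smul_def, hsmul,
    hκ.apply_path, hκ.apply_path_inv, hk, mul_one, one_mul]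

theorem apply_eval (hκ : D.IsUniversalCocycle κ) (p : D.FreeProduct) :
    κ (D.eval p) q₀ = p := by
  induction p using D.freeProduct_induction with
  | one => rw [map_one, hκ.isCocycle.one]
  | inv x hx =>
    have h := hκ.isCocycle.inv_smul (D.eval x) q₀
    rwa [D.eval_mem_stabilizer, hx, ← map_inv] at h
  | mul x y hx hy => rw [map_mul, hκ.isCocycle, D.eval_mem_stabilizer, hx, hy]
  | vertex i o k => exact hκ.apply_eval_vertexHom i o k
  | edge i o => rw [D.eval_edge, hκ.apply_label]

end IsUniversalCocycle

variable (D)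

theorem exists_isUniversalCocycle (hG : IsAmalgam H C) : ∃ κ, D.IsUniversalCocycle κ := by
  obtain ⟨κ, hκ, hof, hbase⟩ :=
    hG.exists_isCocycle D.localCocycle D.isCocycle_localCocycle D.localCocycle_eq_one_of_mem
  exact ⟨κ, hκ, hof, hbase⟩

/-- The subgroup theorem of Karrass and Solitar, for stabilizers of actions in which `C` acts
freely. -/
theorem nonempty_stabilizer_mulEquiv (hG : IsAmalgam H C) :
    Nonempty (stabilizer G q₀ ≃* D.FreeProduct) := by
  obtain ⟨κ, hκ⟩ := D.exists_isUniversalCocycle hG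
  have eval_apply (g : stabilizer G q₀) : D.eval (κ g q₀) = g := by
    have h := hκ.path_smul_mul_eval hG g q₀
    rwa [g.2, D.path_base, one_mul, mul_one] at h
  exact ⟨.symm
    { toFun p := ⟨D.eval p, D.eval_mem_stabilizer p⟩
      invFun g := κ g q₀
      left_inv := hκ.apply_eval
      right_inv g := Subtype.ext (eval_apply g)
      map_mul' x y := Subtype.ext (map_mul D.eval x y) }⟩

/-! ### Almost equivariance -/

theorem finite_label_ne_one [Finite D.Loop] [Finite C] (i : ι) :
    {q : Q | D.label i ⟦q⟧ ≠ 1}.Finite := by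
  refine finite_setOf_orbitRel_mk_mem C (s := {o | D.label i o ≠ 1})
    ((Set.finite_range fun e : D.Loop => e.1.2).subset fun o ho => ?_)
  exact ⟨⟨(i, o), ho⟩, rfl⟩

theorem finite_nontrivial_vertexGroup (hD : {v | Nontrivial (D.vertexGroup v)}.Finite) (i : ι)
    [Finite (H i)] :
    {q : Q | Nontrivial (D.vertexGroup ⟨i, ⟦q⟧⟩)}.Finite :=
  finite_setOf_orbitRel_mk_mem (H i) (hD.preimage (f := Sigma.mk i) sigma_mk_injective.injOn)

theorem path_smul_of_label_eq_one {i : ι} (h : H i) {q : Q} (hq : D.label i ⟦q⟧ = 1)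
    (hhq : D.label i ⟦h • q⟧ = 1) (hv : ¬ Nontrivial (D.vertexGroup ⟨i, ⟦q⟧⟩)) :
    D.path (h • q) = h * D.path q := by
  have := not_nontrivial_iff_subsingleton.1 hv
  have hvertex : D.vertexPart i h q = 1 := by
    rw [vertexPart, Subsingleton.elim (⟨_, D.coset_stabilizes i h q⟩ : D.vertexGroup ⟨i, ⟦q⟧⟩) 1]
    exact map_one _
  rw [← D.path_smul_mul_eval_localCocycle, localCocycle, hvertex, D.edge_eq_one hq,
    D.edge_eq_one hhq, inv_one, mul_one, mul_one, map_one, mul_one]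

theorem finite_path_smul_ne (hG : IsAmalgam H C) [∀ i, Finite (H i)] [Finite D.Loop]
    (hD : {v | Nontrivial (D.vertexGroup v)}.Finite) (g : G) :
    {q | D.path (g • q) ≠ g * D.path q}.Finite := by
  induction g using hG.induction_on with
  | base c => simp [← Subgroup.smul_def, D.path_smul]
  | of i h =>
    have : Finite C := Finite.Set.subset (H i : Set G) (D.le i)
    have hlabel := D.finite_label_ne_one i
    refine ((hlabel.union (hlabel.preimage (MulAction.injective h).injOn)).union
      (D.finite_nontrivial_vertexGroup hD i)).subset fun q hq => ?_
    contrapose! hq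
    simp only [Set.mem_union, Set.mem_preimage, Set.mem_ofPred_eq, not_or, not_not] at hq
    obtain ⟨⟨hq, hhq⟩, hv⟩ := hq
    rw [Set.mem_ofPred_eq, not_not]
    exact D.path_smul_of_label_eq_one h hq hhq hv
  | mul x y hx hy =>
    refine ((hx.preimage (MulAction.injective y).injOn).union hy).subset fun q hq => ?_
    contrapose! hq
    simp only [Set.mem_union, Set.mem_preimage, Set.mem_ofPred_eq, not_or, not_not] at hq
    rw [Set.mem_ofPred_eq, not_not, mul_smul, hq.1, hq.2, mul_assoc]

end SchreierData
end Schreier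

/-! ### Existence of Schreier data -/

section SchreierExistence

open MulAction

variable {G ι Q : Type*} [Group G] [MulAction G Q] {H : ι → Subgroup G} {C : Subgroup G} {q₀ : Q}

variable (H C q₀) in
/-- The points reached from `C • q₀` by `n` successive applications of elements of the `H i`. -/
def level : ℕ → Set Q
  | 0 => orbit C q₀
  | n + 1 => {q | ∃ i, ∃ h : H i, h • q ∈ level n}

theorem smul_mem_level (le : ∀ i, C ≤ H i) (c : C) {n : ℕ} {q : Q} (hq : q ∈ level H C q₀ n) :
    c • q ∈ level H C q₀ n := by
  cases n with
  | zero => exact mem_orbit_of_mem_orbit c hq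
  | succ n =>
    obtain ⟨i, h, hh⟩ := hq
    refine ⟨i, h * (Subgroup.inclusion (le i) c)⁻¹, ?_⟩
    rw [mul_smul]
    exact (inv_smul_smul (Subgroup.inclusion (le i) c) q).symm ▸ hh

theorem exists_mem_level [Nonempty ι] [IsPretransitive G Q] (hG : IsAmalgam H C) (q : Q) :
    ∃ n, q ∈ level H C q₀ n := by
  have smul_mem (i) (h : H i) (q : Q) : (∃ n, q ∈ level H C q₀ n) → ∃ n, h • q ∈ level H C q₀ n :=
    fun ⟨n, hn⟩ => ⟨n + 1, i, h⁻¹, by rwa [inv_smul_smul]⟩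
  obtain ⟨g, rfl⟩ := exists_smul_eq G q₀ q
  suffices ∀ q : Q, (∃ n, q ∈ level H C q₀ n) → ∃ n, g • q ∈ level H C q₀ n from
    this q₀ ⟨0, mem_orbit_self q₀⟩
  induction g using hG.induction_on with
  | of i h => exact smul_mem i h
  | base c => exact smul_mem (Classical.arbitrary ι) (Subgroup.inclusion (hG.le _) c)
  | mul x y hx hy => exact fun q hq => mul_smul x y q ▸ hx _ (hy q hq)

variable (q₀) in
theorem exists_height [Nonempty ι] [IsPretransitive G Q] (hG : IsAmalgam H C) :
    ∃ n : Q → ℕ, (∀ q, n q = 0 ↔ q ∈ orbit C q₀) ∧ (∀ c : C, ∀ q, n (c • q) = n q) ∧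
      ∀ q, n q ≠ 0 → ∃ i, ∃ h : H i, n (h • q) < n q := by
  classical
  have hex := exists_mem_level (q₀ := q₀) hG
  refine ⟨fun q => Nat.find (hex q), fun q => Nat.find_eq_zero _, fun c q => ?_, fun q hq => ?_⟩
  · have hiff (n : ℕ) : c • q ∈ level H C q₀ n ↔ q ∈ level H C q₀ n :=
      ⟨fun h => inv_smul_smul c q ▸ smul_mem_level hG.le c⁻¹ h, smul_mem_level hG.le c⟩
    simp only [hiff]
  · obtain ⟨n, hn⟩ := Nat.exists_eq_succ_of_ne_zero hq
    obtain ⟨i, h, hh⟩ : q ∈ level H C q₀ n.succ := by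
      rw [← hn]
      exact Nat.find_spec (hex q)
    exact ⟨i, h, (Nat.find_le hh).trans_lt (hn ▸ n.lt_succ_self)⟩

theorem exists_equivariant_of_free (free : ∀ q : Q, stabilizer C q = ⊥) :
    ∃ γ : Q → C, ∀ c : C, ∀ q, γ (c • q) = c * γ q := by
  have hex (q : Q) : ∃ c : C, c • (⟦q⟧ : orbitRel.Quotient C Q).out = q :=
    (orbitRel C Q).symm (Quotient.mk_out q)
  choose γ hγ using hex
  refine ⟨γ, fun c q => ?_⟩
  have hout : (⟦c • q⟧ : orbitRel.Quotient C Q) = ⟦q⟧ := orbitRel_mk_smul c.2 q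
  rw [← inv_mul_eq_one, ← Subgroup.mem_bot, ← free (⟦q⟧ : orbitRel.Quotient C Q).out,
    mem_stabilizer_iff, mul_smul, mul_smul, hγ, inv_smul_eq_iff]
  exact (hγ (c • q)).symm.trans (by rw [hout])

theorem exists_equivariant_coset {K : Subgroup G} (le : C ≤ K)
    (free : ∀ q : Q, stabilizer C q = ⊥) {rep : orbitRel.Quotient K Q → Q}
    (hrep : ∀ o, ⟦rep o⟧ = o) :
    ∃ u : Q → K, (∀ q, u q • rep ⟦q⟧ = q) ∧ (∀ o, u (rep o) = 1) ∧
      ∀ c : C, ∀ q, (u (c • q) : G) = c * u q := by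
  obtain ⟨γ, hγ⟩ := exists_equivariant_of_free free
  have hex (q : Q) : ∃ k : K, k • rep ⟦q⟧ = q := Quotient.exact (hrep ⟦q⟧).symm
  choose f hf using hex
  have mk_smul (c : C) (q : Q) : (⟦c • q⟧ : orbitRel.Quotient K Q) = ⟦q⟧ :=
    orbitRel_mk_smul (le c.2) q
  let u (q : Q) : K := Subgroup.inclusion le (γ q) * f ((γ q)⁻¹ • q)
  have u_smul_rep (q : Q) : u q • rep ⟦q⟧ = q := by
    have h := hf ((γ q)⁻¹ • q)
    rw [mk_smul] at h
    rw [mul_smul, h]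
    exact smul_inv_smul (γ q) q
  have u_smul (c : C) (q : Q) : (u (c • q) : G) = c * u q := by
    simp only [u, hγ, _root_.mul_inv_rev, mul_smul, inv_smul_smul, Subgroup.coe_mul,
      Subgroup.coe_inclusion, mul_assoc]
  refine ⟨fun q => u q * (u (rep ⟦q⟧))⁻¹, fun q => ?_, fun o => ?_, fun c q => ?_⟩
  · have h := u_smul_rep (rep ⟦q⟧)
    rw [hrep] at h
    rw [mul_smul, inv_smul_eq_iff.2 h.symm, u_smul_rep]
  · simp only [hrep, mul_inv_cancel]
  · simp only [mk_smul, Subgroup.coe_mul, u_smul, mul_assoc]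

theorem exists_minimal_rep {X : Type*} (s : Setoid X) (n : X → ℕ) :
    ∃ rep : Quotient s → X, (∀ o, ⟦rep o⟧ = o) ∧ ∀ x, n (rep ⟦x⟧) ≤ n x := by
  have hne (o : Quotient s) : {x : X | ⟦x⟧ = o}.Nonempty := Quotient.exists_rep o
  exact ⟨fun o => Function.argminOn n _ (hne o), fun o => Function.argminOn_mem n _ (hne o),
    fun x => Function.argminOn_le n {y : X | ⟦y⟧ = ⟦x⟧} rfl⟩

theorem exists_rec_of_measure {Q X : Type*} (n : Q → ℕ) {parent : Q → Q}
    (hparent : ∀ q, n q ≠ 0 → n (parent q) < n q) (a : Q → X) (step : Q → X → X) :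
    ∃ t : Q → X, (∀ q, n q = 0 → t q = a q) ∧ ∀ q, n q ≠ 0 → t q = step q (t (parent q)) := by
  classical
  let t : Q → X := (measure n).wf.fix fun q rec =>
    if h : n q = 0 then a q else step q (rec (parent q) (hparent q h))
  have ht (q : Q) : t q = if n q = 0 then a q else step q (t (parent q)) :=
    (measure n).wf.fix_eq _ q
  exact ⟨t, fun q hq => by rw [ht, if_pos hq], fun q hq => by rw [ht, if_neg hq]⟩

theorem exists_schreierData [Nonempty ι] [IsPretransitive G Q] (hG : IsAmalgam H C)
    (free : ∀ q : Q, stabilizer C q = ⊥) (q₀ : Q) : Nonempty (SchreierData H C q₀) := by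
  obtain ⟨n, n_eq_zero, n_smul, n_step⟩ := exists_height q₀ hG
  choose rep mk_rep n_rep using fun i => exists_minimal_rep (orbitRel (H i) Q) n
  choose u u_smul_rep u_rep u_smul using fun i => exists_equivariant_coset (hG.le i) free (mk_rep i)
  obtain ⟨γ, hγ⟩ := exists_equivariant_of_free free
  let index (q : Q) : ι := Classical.epsilon fun i => n (rep i ⟦q⟧) < n q
  have n_rep_index (q : Q) (hq : n q ≠ 0) : n (rep (index q) ⟦q⟧) < n q := by
    refine Classical.epsilon_spec (p := fun i => n (rep i ⟦q⟧) < n q) ?_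
    obtain ⟨i, h, hlt⟩ := n_step q hq
    exact ⟨i, (orbitRel_mk_smul h.2 q ▸ n_rep i (h • q)).trans_lt hlt⟩
  have mk_smul (i : ι) (c : C) (q : Q) : (⟦c • q⟧ : orbitRel.Quotient (H i) Q) = ⟦q⟧ :=
    orbitRel_mk_smul (hG.le i c.2) q
  have index_smul (c : C) (q : Q) : index (c • q) = index q := by
    simp only [index, n_smul, mk_smul]
  obtain ⟨path, path_zero, path_succ⟩ := exists_rec_of_measure n n_rep_index
    (fun q => ((γ q * (γ q₀)⁻¹ : C) : G)) fun q x => u (index q) q * x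
  exact ⟨{
    depth := n
    rep := rep
    coset := u
    path := path
    coset_smul_rep := u_smul_rep
    coset_rep := u_rep
    coset_smul := u_smul
    path_smul c q := by
      by_cases hq : n q = 0
      · rw [path_zero q hq, path_zero _ ((n_smul c q).trans hq), hγ, mul_assoc, Subgroup.coe_mul]
      · rw [path_succ q hq, path_succ _ ((n_smul c q).trans_ne hq), index_smul, u_smul, mk_smul,
          mul_assoc]
    path_base := by rw [path_zero q₀ ((n_eq_zero q₀).2 (mem_orbit_self q₀)), mul_inv_cancel,
      Subgroup.coe_one]
    path_eq q := or_iff_not_imp_left.2 fun hq =>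
      have hq := mt (n_eq_zero q).1 hq
      ⟨index q, n_rep_index q hq, path_succ q hq⟩ }⟩

end SchreierExistence

/-! ### Almost equivariant maps -/

section AlmostEquivariant

open MulAction

variable {G Q X : Type*} [Group G] [MulAction G Q]

theorem finite_range_of_almost_invariant {Y : Set G} (hY : Y.Finite)
    [IsPretransitive (Subgroup.closure Y) Q] {F : Q → X}
    (hF : ∀ y ∈ Y, {q | F (y • q) ≠ F q}.Finite) : (Set.range F).Finite := by
  rcases isEmpty_or_nonempty Q with _ | ⟨⟨q₀⟩⟩
  · exact Set.finite_range F
  let bad (y : G) : Set Q := {q | F (y • q) ≠ F q}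
  let V : Set X := insert (F q₀) (⋃ y ∈ Y, F '' bad y ∪ (fun q => F (y • q)) '' bad y)
  have hV : V.Finite := .insert _ <| hY.biUnion fun y hy =>
    ((hF y hy).image _).union ((hF y hy).image _)
  have mem_V {y q} (hy : y ∈ Y) : F (y • q) ∈ V ↔ F q ∈ V := by
    by_cases hq : F (y • q) = F q
    · rw [hq]
    · exact iff_of_true
        (.inr <| Set.mem_biUnion hy <| .inr <| Set.mem_image_of_mem (fun q => F (y • q)) hq)
        (.inr <| Set.mem_biUnion hy <| .inl <| Set.mem_image_of_mem F hq)
  have mem_V_closure (g) (hg : g ∈ Subgroup.closure Y) (q : Q) : F (g • q) ∈ V ↔ F q ∈ V := by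
    induction hg using Subgroup.closure_induction generalizing q with
    | mem y hy => exact mem_V hy
    | one => rw [one_smul]
    | mul x y _ _ hx hy => rw [mul_smul, hx, hy]
    | inv x _ hx => rw [← hx, smul_inv_smul]
  refine hV.subset ?_
  rintro _ ⟨q, rfl⟩
  obtain ⟨g, rfl⟩ := exists_smul_eq (Subgroup.closure Y) q₀ q
  exact (mem_V_closure g g.2 q₀).2 (Set.mem_insert _ _)

/-- The map `q ↦ (t q)⁻¹ T` to `G ⧸ T` is almost invariant under `T`, so it has finite range, and
so has `q ↦ (w * t q)⁻¹ T`, which almost equals its translate by `w`; together, these two maps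
determine `t q` up to finitely many possibilities. -/
theorem finite_of_almost_equivariant {Y : Set G} (hY : Y.Finite)
    (hQ : IsPretransitive (Subgroup.closure Y) Q) {t : Q → G} (t_injective : Function.Injective t)
    (ht : ∀ g, {q | t (g • q) ≠ g * t q}.Finite) {w : G}
    (hw : {x ∈ Subgroup.closure Y | w * x * w⁻¹ ∈ Subgroup.closure Y}.Finite) : Finite Q := by
  set T := Subgroup.closure Y
  let F (g : G) : G ⧸ T := ↑g⁻¹
  have hF {g g'} : F g = F g' ↔ g' * g⁻¹ ∈ T := by
    rw [eq_comm, QuotientGroup.eq, inv_inv]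
  have hrange : (Set.range fun q => F (t q)).Finite := by
    refine finite_range_of_almost_invariant hY fun y hy => (ht y).subset fun q hq heq => hq ?_
    rw [heq, hF, _root_.mul_inv_rev, mul_inv_cancel_left]
    exact inv_mem (Subgroup.subset_closure hy)
  have hrange_w : (Set.range fun q => F (w * t q)).Finite := by
    refine (hrange.union ((ht w).image fun q => F (w * t q))).subset ?_
    rintro _ ⟨q, rfl⟩
    by_cases hq : t (w • q) = w * t q
    · exact .inl ⟨w • q, congrArg F hq⟩
    · exact .inr ⟨q, hq, rfl⟩
  let Φ (q : Q) : (G ⧸ T) × (G ⧸ T) := (F (t q), F (w * t q))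
  have hfiber (q : Q) : {q' | Φ q' = Φ q}.Finite := by
    refine (hw.preimage ((mul_left_injective (t q)⁻¹).comp t_injective).injOn).subset ?_
    intro q' hq'
    obtain ⟨h₁, h₂⟩ := Prod.ext_iff.1 hq'
    refine ⟨hF.1 h₁.symm, ?_⟩
    simpa only [Function.comp_apply, _root_.mul_inv_rev, mul_assoc] using hF.1 h₂.symm
  refine Set.finite_univ_iff.1 (Set.Finite.of_finite_fibers Φ ?_ ?_)
  · exact (hrange.prod hrange_w).subset fun _ ⟨q, _, hq⟩ => hq ▸ ⟨⟨q, rfl⟩, ⟨q, rfl⟩⟩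
  · rintro _ ⟨q, -, rfl⟩
    exact (hfiber q).subset fun q' hq' => hq'.2

end AlmostEquivariant

/-! ### Dihedral groups and complements -/

section Dihedral

variable {G : Type*} [Group G] {s f : G}

theorem exists_zpow_of_mem_closure_pair (hs : s * s = 1) (hsf : s * f = f⁻¹ * s) {g : G}
    (hg : g ∈ Subgroup.closure {s, f}) : ∃ i : ℤ, g = f ^ i ∨ g = f ^ i * s := by
  have semiconj (i : ℤ) : s * f ^ i = f ^ (-i) * s := by
    rw [_root_.zpow_neg, ← _root_.inv_zpow]
    exact SemiconjBy.zpow_right hsf i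
  induction hg using Subgroup.closure_induction_left with
  | one => exact ⟨0, .inl (zpow_zero f).symm⟩
  | mul_left x hx y _ hy =>
    obtain ⟨i, rfl | rfl⟩ := hy <;> obtain rfl | rfl := hx
    · exact ⟨-i, .inr (semiconj i)⟩
    · exact ⟨1 + i, .inl (_root_.zpow_one_add x i).symm⟩
    · exact ⟨-i, .inl (by rw [← mul_assoc, semiconj, mul_assoc, hs, mul_one])⟩
    · exact ⟨1 + i, .inr (by rw [_root_.zpow_one_add, mul_assoc])⟩
  | inv_mul_cancel x hx y _ hy =>
    obtain ⟨i, rfl | rfl⟩ := hy <;> obtain rfl | rfl := hx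
    · exact ⟨-i, .inr (by rw [inv_eq_of_mul_eq_one_left hs, semiconj])⟩
    · exact ⟨-1 + i, .inl (by rw [_root_.zpow_add, _root_.zpow_neg_one])⟩
    · exact ⟨-i, .inl (by
        rw [inv_eq_of_mul_eq_one_left hs, ← mul_assoc, semiconj, mul_assoc, hs, mul_one])⟩
    · exact ⟨-1 + i, .inr (by rw [_root_.zpow_add, _root_.zpow_neg_one, mul_assoc])⟩

theorem finite_closure_pair (hs : s * s = 1) (hsf : s * f = f⁻¹ * s) (hf : IsOfFinOrder f) :
    Finite (Subgroup.closure {s, f}) := by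
  have hfin : (Subgroup.zpowers f : Set G).Finite := finite_zpowers.2 hf
  refine (hfin.union (hfin.image (· * s))).subset fun g hg => ?_
  obtain ⟨i, rfl | rfl⟩ := exists_zpow_of_mem_closure_pair hs hsf hg
  · exact .inl ⟨i, rfl⟩
  · exact .inr ⟨f ^ i, ⟨i, rfl⟩, rfl⟩

variable {Q : Type*} [MulAction G Q]

theorem mul_mul_inv_smul_ne {g : G} (hg : ∀ q : Q, g • q ≠ q) (x : G) (q : Q) :
    (x * g * x⁻¹) • q ≠ q := fun h =>
  hg (x⁻¹ • q) (by rwa [mul_smul, mul_smul, ← eq_inv_smul_iff] at h)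

theorem stabilizer_zpowers_eq_bot (hs : s * s = 1) (hs_free : ∀ q : Q, s • q ≠ q) (q : Q) :
    MulAction.stabilizer (Subgroup.zpowers s) q = ⊥ := by
  refine (Subgroup.eq_bot_iff_forall _).2 ?_
  rintro ⟨_, i, rfl⟩ (hi : s ^ i • q = q)
  refine Subtype.ext ?_
  change s ^ i = 1
  rw [zpow_eq_zpow_emod' i ((sq s).trans hs)] at hi ⊢
  rcases i.emod_two_eq_zero_or_one with h | h
  · simp [h]
  · exact absurd hi (by simpa [h] using hs_free q)

theorem zpow_mul_smul_ne (hsf : s * f = f⁻¹ * s) (hs_free : ∀ q : Q, s • q ≠ q)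
    (hfs_free : ∀ q : Q, (f * s) • q ≠ q) (i : ℤ) (q : Q) : (f ^ i * s) • q ≠ q := by
  have semiconj (j : ℤ) : s * (f ^ j)⁻¹ = f ^ j * s := by
    rw [← _root_.inv_zpow]
    simpa only [inv_inv] using (SemiconjBy.zpow_right (SemiconjBy.inv_right hsf) j).eq
  obtain ⟨j, rfl | rfl⟩ := i.even_or_odd'
  · have : f ^ (2 * j) * s = f ^ j * s * (f ^ j)⁻¹ := by
      rw [mul_assoc, semiconj, ← mul_assoc, ← _root_.zpow_add, two_mul]
    exact this ▸ mul_mul_inv_smul_ne hs_free _ q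
  · have : f ^ (2 * j + 1) * s = f ^ j * (f * s) * (f ^ j)⁻¹ := by
      rw [mul_assoc, mul_assoc f, semiconj, ← mul_assoc, ← mul_assoc, ← _root_.zpow_add_one,
        ← _root_.zpow_add]
      ring_nf
    exact this ▸ mul_mul_inv_smul_ne hfs_free _ q

theorem stabilizer_closure_pair_le_zpowers (hs : s * s = 1) (hsf : s * f = f⁻¹ * s)
    (hs_free : ∀ q : Q, s • q ≠ q) (hfs_free : ∀ q : Q, (f * s) • q ≠ q) {g : G}
    (hg : g ∈ Subgroup.closure {s, f}) {q : Q} (hgq : g • q = q) : g ∈ Subgroup.zpowers f := by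
  obtain ⟨i, rfl | rfl⟩ := exists_zpow_of_mem_closure_pair hs hsf hg
  · exact ⟨i, rfl⟩
  · exact absurd hgq (zpow_mul_smul_ne hsf hs_free hfs_free i q)

theorem subsingleton_or_nonempty_mulEquiv_zmod {K : Type*} [Group K] {p : ℕ} (hp : p.Prime)
    {j : K →* G} (hj : Function.Injective j) {x : G} (hx : x ^ p = 1)
    (hjx : ∀ k, j k ∈ Subgroup.zpowers x) :
    Subsingleton K ∨ Nonempty (K ≃* Multiplicative (ZMod p)) := by
  have hcard : Nat.card K ∣ p := by
    refine (Subgroup.card_dvd_of_injective (j.codRestrict _ hjx) fun a b h => ?_).trans ?_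
    · exact hj (Subtype.ext_iff.1 h)
    · rw [Nat.card_zpowers]
      exact orderOf_dvd_of_pow_eq_one hx
  have : Fact p.Prime := ⟨hp⟩
  rcases (Nat.dvd_prime hp).1 hcard with h | h
  · exact .inl (Nat.card_eq_one_iff_unique.1 h).1
  · exact .inr ⟨mulEquivOfPrimeCardEq (p := p) h (by simp)⟩

end Dihedral

section Complement

variable {G : Type*} [Group G] {S T : Subgroup G}

theorem isPretransitive_quotient_of_isComplement' (h : Subgroup.IsComplement' T S) :
    MulAction.IsPretransitive T (G ⧸ S) :=
  (MulAction.isPretransitive_iff_base ((1 : G) : G ⧸ S)).2 fun q => by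
    refine ⟨h.leftQuotientEquiv q, Eq.trans ?_ (h.quotientGroupMk_leftQuotientEquiv q)⟩
    exact congrArg ((↑) : G → G ⧸ S) (mul_one _)

theorem smul_quotient_ne_of_isComplement' (h : Subgroup.IsComplement' T S) {t : G} (ht : t ∈ T)
    (ht_ne : t ≠ 1) (q : G ⧸ S) : t • q ≠ q := fun heq => by
  have := isPretransitive_quotient_of_isComplement' h
  obtain ⟨⟨x, hx⟩, rfl⟩ := MulAction.exists_smul_eq T ((1 : G) : G ⧸ S) q
  have hS : x⁻¹ * t * x ∈ S := by
    rw [← MulAction.stabilizer_quotient S, MulAction.mem_stabilizer_iff, mul_smul, mul_smul]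
    exact inv_smul_eq_iff.2 heq
  have hT : x⁻¹ * t * x ∈ T := T.mul_mem (T.mul_mem (T.inv_mem hx) ht) hx
  have h_one : x⁻¹ * t * x = 1 := h.disjoint.le_bot ⟨hT, hS⟩
  rw [mul_assoc, inv_mul_eq_one, right_eq_mul] at h_one
  exact ht_ne h_one

end Complement

/-! ### The extended modular group as an amalgam -/

section ExtendedModularGroup

/-- The matrix of the reflection `z ↦ 1 / z̄`. -/
def sigmaGL : GL2Z := ⟨!![0,1;1,0], !![0,1;1,0], by decide, by decide⟩

/-- σ, the class of [[0,1],[1,0]]. -/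
def sigma : Mhat := pr sigmaGL

/-- The rotations ω and φ, of orders two and three. -/
def rot : Bool → Mhat
  | true => omega
  | false => phi

/-- The order of `rot b`. -/
def rotOrder : Bool → ℕ
  | true => 2
  | false => 3

theorem prime_rotOrder (b : Bool) : (rotOrder b).Prime := by
  cases b
  exacts [Nat.prime_three, Nat.prime_two]

/-- The dihedral groups of orders four and six generated by σ and a rotation; they are the
stabilizers of the two special points of the upper half plane. -/
def dihedral (b : Bool) : Subgroup Mhat := Subgroup.closure {sigma, rot b}

theorem mem_pmI {A : GL2Z} : A ∈ pmI ↔ A = 1 ∨ A = -1 := by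
  constructor
  · rintro ⟨k, rfl⟩
    exact k.even_or_odd.imp Even.neg_one_zpow Odd.neg_one_zpow
  · rintro (rfl | rfl)
    · exact one_mem _
    · exact Subgroup.mem_zpowers _

theorem pr_eq_iff {A B : GL2Z} : pr A = pr B ↔ A.1 = B.1 ∨ A.1 = -B.1 := by
  rw [eq_comm, pr, QuotientGroup.mk'_apply, QuotientGroup.mk'_apply, QuotientGroup.eq, mem_pmI,
    inv_mul_eq_iff_eq_mul, inv_mul_eq_iff_eq_mul, mul_one, mul_neg_one, ← Units.val_inj,
    ← Units.val_inj, Units.val_neg]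

theorem sigma_mul_sigma : sigma * sigma = 1 := pr_eq_iff.2 (by decide)

theorem omega_mul_omega : omega * omega = 1 := pr_eq_iff.2 (by decide)

theorem phi_pow_three : phi ^ 3 = 1 := pr_eq_iff.2 (by decide)

theorem nu_mul_nu : nu * nu = 1 := pr_eq_iff.2 (by decide)

theorem nu_mul_tau : nu * tau = tau⁻¹ * nu := pr_eq_iff.2 (by decide)

theorem omega_mul_sigma : omega * sigma = nu := pr_eq_iff.2 (by decide)

theorem phi_mul_sigma : phi * sigma = phi⁻¹ * sigma * phi⁻¹⁻¹ := pr_eq_iff.2 (by decide)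

theorem sigma_mul_rot (b : Bool) : sigma * rot b = (rot b)⁻¹ * sigma := by
  cases b <;> exact pr_eq_iff.2 (by decide)

theorem rot_pow_rotOrder (b : Bool) : rot b ^ rotOrder b = 1 := by
  cases b
  exacts [phi_pow_three, (sq omega).trans omega_mul_omega]

theorem rot_zpow (b : Bool) (i : ℤ) :
    rot b ^ i = 1 ∨ rot b ^ i = rot b ∨ rot b ^ i = (rot b)⁻¹ := by
  cases b
  · have h : phi ^ (2 : ℤ) = phi⁻¹ :=
      eq_inv_of_mul_eq_one_left ((pow_succ phi 2).symm.trans phi_pow_three)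
    rw [zpow_eq_zpow_emod' i (rot_pow_rotOrder false), rot, rotOrder]
    have : i % 3 = 0 ∨ i % 3 = 1 ∨ i % 3 = 2 := by lia
    rcases this with hi | hi | hi <;> simp [hi, h]
  · rw [zpow_eq_zpow_emod' i (rot_pow_rotOrder true), rot, rotOrder]
    rcases i.emod_two_eq_zero_or_one with hi | hi <;> simp [hi]

theorem mem_dihedral_sdiff {b : Bool} {h : Mhat} (hb : h ∈ dihedral b)
    (hC : h ∉ Subgroup.zpowers sigma) :
    ∃ r c, (r = rot b ∨ r = (rot b)⁻¹) ∧ (c = 1 ∨ c = sigma) ∧ h = r * c := by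
  have hsigma := Subgroup.mem_zpowers sigma
  obtain ⟨i, hi⟩ := exists_zpow_of_mem_closure_pair sigma_mul_sigma (sigma_mul_rot b) hb
  rcases rot_zpow b i with hr | hr
  · rw [hr, one_mul] at hi
    obtain rfl | rfl := hi
    · exact absurd (one_mem _) hC
    · exact absurd hsigma hC
  · rw [← mul_one (rot b ^ i)] at hi
    obtain hi | hi := hi
    exacts [⟨_, 1, hr, .inl rfl, hi⟩, ⟨_, sigma, hr, .inr rfl, by rw [hi, mul_one]⟩]

theorem exists_pr_eq (g : Mhat) : ∃ A, pr A = g :=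
  QuotientGroup.mk'_surjective pmI g

theorem pr_toGL_mem_iSup_dihedral (A : SpecialLinearGroup (Fin 2) ℤ) :
    pr (SpecialLinearGroup.toGL A) ∈ ⨆ b, dihedral b := by
  have rot_mem (b : Bool) : rot b ∈ ⨆ b, dihedral b :=
    Subgroup.mem_iSup_of_mem b (Subgroup.subset_closure (.inr rfl))
  have hA : A ∈ Subgroup.closure {ModularGroup.S, ModularGroup.T} := by
    rw [_root_.SpecialLinearGroup.SL2Z_generators]
    exact Subgroup.mem_top A
  suffices Subgroup.closure {ModularGroup.S, ModularGroup.T} ≤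
      (⨆ b, dihedral b).comap (pr.comp SpecialLinearGroup.toGL) from this hA
  rw [Subgroup.closure_le]
  rintro _ (rfl | rfl)
  · have hS : pr (SpecialLinearGroup.toGL ModularGroup.S) = omega := pr_eq_iff.2 (by decide)
    exact Subgroup.mem_comap.2 (hS ▸ rot_mem true)
  · have hT : pr (SpecialLinearGroup.toGL ModularGroup.T) = omega * phi := pr_eq_iff.2 (by decide)
    exact Subgroup.mem_comap.2 (hT ▸ mul_mem (rot_mem true) (rot_mem false))

theorem top_le_iSup_dihedral : ⊤ ≤ ⨆ b, dihedral b := fun g _ => by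
  obtain ⟨A, rfl⟩ := exists_pr_eq g
  have mem_of_det {B : GL2Z} (hB : B.1.det = 1) : pr B ∈ ⨆ b, dihedral b := by
    have : SpecialLinearGroup.toGL ⟨B.1, hB⟩ = B := Units.ext rfl
    exact this ▸ pr_toGL_mem_iSup_dihedral ⟨B.1, hB⟩
  have hsigma : sigma ∈ ⨆ b, dihedral b :=
    Subgroup.mem_iSup_of_mem true (Subgroup.subset_closure (.inl rfl))
  rcases Int.isUnit_iff.1 ((isUnit_iff_isUnit_det _).1 A.isUnit) with h | h
  · exact mem_of_det h
  · rw [← Subgroup.mul_mem_cancel_left _ hsigma, sigma, ← map_mul]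
    refine mem_of_det ?_
    rw [Units.val_mul, det_mul, h]
    decide

/-- The positive definite binary quadratic form `A Q Aᵀ` attached to the class of `A`, with
`Q = 3 x² - 2 x y + 3 y²` a form in the fundamental domain of both rotations. -/
def formMatrix (g : Mhat) : Matrix (Fin 2) (Fin 2) ℤ :=
  Quotient.liftOn' g (fun A => A.1 * !![3, -1; -1, 3] * A.1ᵀ) fun A B h => by
    rcases pr_eq_iff.1 (Quotient.sound' h) with h | h
    · rw [h]
    · rw [h, transpose_neg, Matrix.mul_neg, Matrix.neg_mul, Matrix.neg_mul, neg_neg]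

theorem formMatrix_pr (A : GL2Z) : formMatrix (pr A) = A.1 * !![3, -1; -1, 3] * A.1ᵀ := rfl

theorem formMatrix_pr_mul (A : GL2Z) (g : Mhat) :
    formMatrix (pr A * g) = A.1 * formMatrix g * A.1ᵀ := by
  obtain ⟨B, rfl⟩ := exists_pr_eq g
  rw [← map_mul, formMatrix_pr, formMatrix_pr, Units.val_mul, transpose_mul]
  simp only [Matrix.mul_assoc]

theorem formMatrix_symm (g : Mhat) : formMatrix g 1 0 = formMatrix g 0 1 := by
  obtain ⟨B, rfl⟩ := exists_pr_eq g
  simp only [formMatrix_pr, Matrix.mul_apply, of_apply, cons_val', cons_val_fin_one,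
    Fin.sum_univ_two, Fin.isValue, cons_val_zero, cons_val_one, transpose_apply, mul_neg, mul_one,
    Int.reduceNeg]
  ring

theorem formMatrix_diag_nonneg (g : Mhat) (i : Fin 2) : 0 ≤ formMatrix g i i := by
  obtain ⟨B, rfl⟩ := exists_pr_eq g
  simp only [formMatrix_pr, Matrix.mul_apply, of_apply, cons_val', cons_val_fin_one,
    Fin.sum_univ_two, Fin.isValue, cons_val_zero, cons_val_one, transpose_apply, mul_neg, mul_one,
    Int.reduceNeg]
  nlinarith [sq_nonneg (B.1 i 0 - B.1 i 1), sq_nonneg (B.1 i 0), sq_nonneg (B.1 i 1)]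

theorem formMatrix_pr_mul_apply (A : GL2Z) (g : Mhat) (i j : Fin 2) :
    formMatrix (pr A * g) i j = A.1 i 0 * A.1 j 0 * formMatrix g 0 0 +
      (A.1 i 0 * A.1 j 1 + A.1 i 1 * A.1 j 0) * formMatrix g 0 1 +
      A.1 i 1 * A.1 j 1 * formMatrix g 1 1 := by
  simp only [formMatrix_pr_mul, Matrix.mul_apply, transpose_apply, Fin.sum_univ_two,
    formMatrix_symm]
  ring

theorem formMatrix_sigma_mul (g : Mhat) :
    formMatrix (sigma * g) =
      !![formMatrix g 1 1, formMatrix g 0 1; formMatrix g 0 1, formMatrix g 0 0] := by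
  ext i j
  rw [sigma, formMatrix_pr_mul_apply]
  fin_cases i <;> fin_cases j <;> simp [sigmaGL]

theorem formMatrix_omega_mul (g : Mhat) :
    formMatrix (omega * g) =
      !![formMatrix g 1 1, -formMatrix g 0 1; -formMatrix g 0 1, formMatrix g 0 0] := by
  ext i j
  rw [omega, formMatrix_pr_mul_apply]
  fin_cases i <;> fin_cases j <;> simp [omegaGL]

theorem formMatrix_phi_mul (g : Mhat) :
    formMatrix (phi * g) =
      !![formMatrix g 1 1, -formMatrix g 0 1 - formMatrix g 1 1;
        -formMatrix g 0 1 - formMatrix g 1 1,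
        formMatrix g 0 0 + 2 * formMatrix g 0 1 + formMatrix g 1 1] := by
  ext i j
  rw [phi, formMatrix_pr_mul_apply]
  fin_cases i <;> fin_cases j <;> simp [phiGL] <;> ring

theorem formMatrix_phi_inv_mul (g : Mhat) :
    formMatrix (phi⁻¹ * g) =
      !![formMatrix g 0 0 + 2 * formMatrix g 0 1 + formMatrix g 1 1,
        -formMatrix g 0 0 - formMatrix g 0 1;
        -formMatrix g 0 0 - formMatrix g 0 1, formMatrix g 0 0] := by
  ext i j
  rw [phi, ← map_inv, formMatrix_pr_mul_apply]
  fin_cases i <;> fin_cases j <;> simp [phiGL] <;> ring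

/-- The classes whose form lies in the fundamental domain of a rotation. -/
def source : Bool → Set Mhat
  | true => {g | formMatrix g 0 1 < 0}
  | false => {g | 0 < formMatrix g 0 0 + 2 * formMatrix g 0 1 ∧
      0 < formMatrix g 1 1 + 2 * formMatrix g 0 1}

/-- The union of the translates of `source b` by the nontrivial powers of `rot b`. -/
def target : Bool → Set Mhat
  | true => {g | 0 < formMatrix g 0 1}
  | false => {g | formMatrix g 0 0 + 2 * formMatrix g 0 1 < 0 ∨
      formMatrix g 1 1 + 2 * formMatrix g 0 1 < 0}

theorem one_mem_source (b : Bool) : 1 ∈ source b := by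
  have h : formMatrix 1 = !![3, -1; -1, 3] := by
    rw [← map_one pr, formMatrix_pr, Units.val_one, transpose_one, Matrix.one_mul, Matrix.mul_one]
  cases b <;> simp [source, h]

theorem sigma_mul_mem_source {b : Bool} {g : Mhat} (hg : g ∈ source b) :
    sigma * g ∈ source b := by
  cases b <;> simp_all [source, formMatrix_sigma_mul]

theorem rot_mul_mem_target {b : Bool} {g : Mhat} (hg : g ∈ source b) :
    rot b * g ∈ target b := by
  cases b <;> simp_all [source, target, rot, formMatrix_omega_mul, formMatrix_phi_mul]
  lia

theorem rot_inv_mul_mem_target {b : Bool} {g : Mhat} (hg : g ∈ source b) :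
    (rot b)⁻¹ * g ∈ target b := by
  cases b
  · simp_all [source, target, rot, formMatrix_phi_inv_mul]
    lia
  · rw [rot, inv_eq_of_mul_eq_one_left omega_mul_omega]
    exact rot_mul_mem_target (b := true) hg

theorem notMem_target {b : Bool} {g : Mhat} (hg : g ∈ source b) : g ∉ target b := by
  cases b
  · exact not_or.2 ⟨lt_asymm hg.1, lt_asymm hg.2⟩
  · exact fun h => lt_asymm (show formMatrix g 0 1 < 0 from hg) h

theorem target_subset_source {b b' : Bool} (h : b ≠ b') : target b' ⊆ source b := fun g hg => by
  have h₀ := formMatrix_diag_nonneg g 0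
  have h₁ := formMatrix_diag_nonneg g 1
  cases b <;> cases b' <;> simp_all [source, target] <;> lia

theorem mul_mem_target {b : Bool} {h g : Mhat} (hb : h ∈ dihedral b)
    (hC : h ∉ Subgroup.zpowers sigma) (hg : g ∈ source b) : h * g ∈ target b := by
  obtain ⟨r, c, hr, hc, rfl⟩ := mem_dihedral_sdiff hb hC
  have hcg : c * g ∈ source b := by
    rcases hc with rfl | rfl
    · rwa [one_mul]
    · exact sigma_mul_mem_source hg
  rw [mul_assoc]
  rcases hr with rfl | rfl
  · exact rot_mul_mem_target hcg
  · exact rot_inv_mul_mem_target hcg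

theorem isAmalgam_dihedral : IsAmalgam dihedral (Subgroup.zpowers sigma) :=
  isAmalgam_of_pingPong (U := target) (p := (1 : Mhat))
    (fun _ => Subgroup.zpowers_le.2 (Subgroup.subset_closure (.inl rfl))) top_le_iSup_dihedral
    (fun b => notMem_target (one_mem_source b))
    (fun b _ hb hC => mul_mem_target hb hC (one_mem_source b))
    (fun _ _ hne _ hb hC _ hg => mul_mem_target hb hC (target_subset_source hne hg))

end ExtendedModularGroup

section CuspStabilizer

theorem coe_tauGL_zpow (n : ℤ) : (tauGL ^ n).1 = !![1, n; 0, 1] := by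
  have h : tauGL = SpecialLinearGroup.toGL ModularGroup.T := Units.ext (by decide)
  rw [h, ← map_zpow, ← ModularGroup.coe_T_zpow]
  rfl

theorem tau_zpow_injective : Function.Injective fun n : ℤ => tau ^ n := by
  intro m n h
  have h : tau ^ m = tau ^ n := h
  rw [tau, ← map_zpow, ← map_zpow, pr_eq_iff, coe_tauGL_zpow, coe_tauGL_zpow] at h
  simpa using h

theorem tau_zpow_mem_That (n : ℤ) : tau ^ n ∈ That :=
  That.zpow_mem (Subgroup.subset_closure (.inl rfl)) n

theorem nu_mem_That : nu ∈ That :=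
  Subgroup.subset_closure (.inr rfl)

theorem infinite_That : Infinite That :=
  .of_injective (fun n : ℤ => (⟨tau ^ n, tau_zpow_mem_That n⟩ : That))
    fun _ _ h => tau_zpow_injective (Subtype.ext_iff.1 h)

theorem exists_zpow_of_mem_That {x : Mhat} (hx : x ∈ That) :
    ∃ i : ℤ, x = tau ^ i ∨ x = tau ^ i * nu :=
  exists_zpow_of_mem_closure_pair nu_mul_nu nu_mul_tau (Set.pair_comm tau nu ▸ hx)

theorem apply_one_zero_of_pr_mem_That {A : GL2Z} (hA : pr A ∈ That) : A.1 1 0 = 0 := by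
  obtain ⟨i, h | h⟩ := exists_zpow_of_mem_That hA
  · rw [tau, ← map_zpow, pr_eq_iff, coe_tauGL_zpow] at h
    rcases h with h | h <;> simp [h]
  · rw [tau, nu, ← map_zpow, ← map_mul, pr_eq_iff, Units.val_mul, coe_tauGL_zpow] at h
    rcases h with h | h <;> simp [h, nuGL]

theorem finite_That_inf_conj_omega : {x ∈ That | omega * x * omega⁻¹ ∈ That}.Finite := by
  refine (Set.toFinite {1, nu}).subset fun x ⟨hx, hconj⟩ => ?_
  have apply_zero_one {A : GL2Z} (hA : omega * pr A * omega⁻¹ ∈ That) : A.1 0 1 = 0 := by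
    rw [omega, ← map_inv, ← map_mul, ← map_mul] at hA
    simpa [omegaGL, Matrix.mul_apply, Matrix.vecMul, dotProduct, Fin.sum_univ_two] using
      apply_one_zero_of_pr_mem_That hA
  obtain ⟨i, rfl | rfl⟩ := exists_zpow_of_mem_That hx
  · rw [tau, ← map_zpow] at hconj
    have hi := apply_zero_one hconj
    rw [coe_tauGL_zpow] at hi
    obtain rfl : i = 0 := hi
    exact .inl (zpow_zero tau)
  · rw [tau, nu, ← map_zpow, ← map_mul] at hconj
    have hi := apply_zero_one hconj
    rw [Units.val_mul, coe_tauGL_zpow] at hi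
    obtain rfl : i = 0 := by simpa [nuGL] using hi
    exact .inr (by rw [zpow_zero, one_mul, Set.mem_singleton_iff])

end CuspStabilizer

section Neumann

variable {S : Subgroup Mhat}

theorem IsNeumann.isComplement'_s19 (hS : IsNeumann S) : Subgroup.IsComplement' That S :=
  (Subgroup.isComplement'_of_disjoint_and_mul_eq_univ (disjoint_iff.2 hS.2) hS.1).symm

theorem IsNeumann.infinite_quotient (hS : IsNeumann S) : Infinite (Mhat ⧸ S) :=
  have := infinite_That
  .of_injective _ hS.isComplement'_s19.leftQuotientEquiv.symm.injective

theorem IsNeumann.smul_ne_of_mem_That (hS : IsNeumann S) {x : Mhat} (hx : x ∈ That)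
    (hx_ne : x ≠ 1) (q : Mhat ⧸ S) : x • q ≠ q :=
  smul_quotient_ne_of_isComplement' hS.isComplement'_s19 hx hx_ne q

theorem IsNeumann.sigma_smul_ne (hS : IsNeumann S) (q : Mhat ⧸ S) : sigma • q ≠ q := by
  let x : Mhat := omega * tau⁻¹ * omega⁻¹
  have hconj : sigma = x * (tau⁻¹ * nu) * x⁻¹ := pr_eq_iff.2 (by decide)
  rw [hconj]
  refine mul_mul_inv_smul_ne (hS.smul_ne_of_mem_That ?_ ?_) x q
  · exact mul_mem (zpow_neg_one tau ▸ tau_zpow_mem_That (-1)) nu_mem_That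
  · exact pr_eq_iff.not.2 (by decide)

theorem IsNeumann.rot_mul_sigma_smul_ne (hS : IsNeumann S) (b : Bool) (q : Mhat ⧸ S) :
    (rot b * sigma) • q ≠ q := by
  cases b
  · rw [rot, phi_mul_sigma]
    exact mul_mul_inv_smul_ne hS.sigma_smul_ne _ q
  · rw [rot, omega_mul_sigma]
    exact hS.smul_ne_of_mem_That nu_mem_That (pr_eq_iff.not.2 (by decide)) q

theorem IsNeumann.stabilizer_zpowers_sigma (hS : IsNeumann S) (q : Mhat ⧸ S) :
    MulAction.stabilizer (Subgroup.zpowers sigma) q = ⊥ :=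
  stabilizer_zpowers_eq_bot sigma_mul_sigma hS.sigma_smul_ne q

theorem finite_dihedral (b : Bool) : Finite (dihedral b) :=
  finite_closure_pair sigma_mul_sigma (sigma_mul_rot b) <| isOfFinOrder_iff_pow_eq_one.2
    ⟨_, (prime_rotOrder b).pos, rot_pow_rotOrder b⟩

theorem IsNeumann.stabilizer_dihedral (hS : IsNeumann S) (b : Bool) (q : Mhat ⧸ S) :
    Subsingleton (MulAction.stabilizer (dihedral b) q) ∨
      Nonempty (MulAction.stabilizer (dihedral b) q ≃* Multiplicative (ZMod (rotOrder b))) := by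
  let j := (dihedral b).subtype.comp (MulAction.stabilizer (dihedral b) q).subtype
  refine subsingleton_or_nonempty_mulEquiv_zmod (prime_rotOrder b) (j := j)
    (Subtype.val_injective.comp Subtype.val_injective) (rot_pow_rotOrder b) fun k => ?_
  exact stabilizer_closure_pair_le_zpowers sigma_mul_sigma (sigma_mul_rot b) hS.sigma_smul_ne
    (hS.rot_mul_sigma_smul_ne b) k.1.2 k.2

end Neumann

/-! ### Free products of families -/

section CoprodI

open Monoid

/-- Trivial factors may be dropped from a free product. -/
def coprodINontrivialEquiv {ι : Type*} (M : ι → Type*) [∀ i, Monoid (M i)] :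
    CoprodI (fun i : {i // Nontrivial (M i)} => M i) ≃* CoprodI M :=
  open Classical in
  MonoidHom.toMulEquiv
    (CoprodI.lift fun i => CoprodI.of (M := M) (i := i))
    (CoprodI.lift fun i => if h : Nontrivial (M i) then
      CoprodI.of (M := fun i : {i // Nontrivial (M i)} => M i) (i := ⟨i, h⟩) else 1)
    (CoprodI.ext_hom _ _ fun ⟨i, hi⟩ => by ext; simp [hi])
    (CoprodI.ext_hom _ _ fun i => by
      ext m
      by_cases h : Nontrivial (M i)
      · simp [h]
      · have := not_nontrivial_iff_subsingleton.1 h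
        simp [Subsingleton.elim m 1])

/-- The free product of a family indexed by a sum is the free product of its two parts. -/
def coprodISumEquiv {ι κ : Type*} (M : ι ⊕ κ → Type*) [∀ x, Monoid (M x)] :
    Coprod (CoprodI fun i => M (.inl i)) (CoprodI fun k => M (.inr k)) ≃* CoprodI M :=
  MonoidHom.toMulEquiv
    (Coprod.lift (CoprodI.lift fun _ => CoprodI.of) (CoprodI.lift fun _ => CoprodI.of))
    (CoprodI.lift fun
      | .inl i => Coprod.inl.comp (CoprodI.of (M := fun i => M (.inl i)) (i := i))
      | .inr k => Coprod.inr.comp (CoprodI.of (M := fun k => M (.inr k)) (i := k)))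
    (by ext <;> simp)
    (CoprodI.ext_hom _ _ fun x => by cases x <;> ext <;> simp)

end CoprodI

/-! ### Neumann subgroups -/

namespace SchreierData

variable {G : Type} {ι Q : Type*} [Group G] [MulAction G Q] {H : ι → Subgroup G} {C : Subgroup G}
  {q₀ : Q} (D : SchreierData H C q₀)

/-- The indices of the indecomposable free factors: vertices with nontrivial group, and loops. -/
abbrev FactorIndex : Type _ :=
  {v // Nontrivial (D.vertexGroup v)} ⊕ D.Loop

/-- The free factors of `D.FreeProduct`: nontrivial vertex groups, and one infinite cyclic group
for each loop. -/
def Factor : D.FactorIndex → Type :=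
  Sum.elim (fun v => D.vertexGroup v) fun _ => FreeGroup Unit

instance : ∀ x, Group (D.Factor x)
  | .inl v => inferInstanceAs (Group (D.vertexGroup v))
  | .inr _ => inferInstanceAs (Group (FreeGroup Unit))

/-- The decomposition of `D.FreeProduct` into its factors. -/
def freeProductEquiv : D.FreeProduct ≃* Monoid.CoprodI D.Factor :=
  (MulEquiv.coprodCongr (coprodINontrivialEquiv _).symm freeGroupEquivCoprodI).trans
    (coprodISumEquiv D.Factor)

end SchreierData

namespace IsNeumann

variable {S : Subgroup Mhat} {q₀ : Mhat ⧸ S}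

theorem infinite_factorIndex (hS : IsNeumann S)
    (D : SchreierData dihedral (Subgroup.zpowers sigma) q₀) : Infinite D.FactorIndex := by
  by_contra hfin
  have := not_infinite_iff_finite.1 hfin
  have : Finite D.Loop := .of_injective (Sum.inr : _ → D.FactorIndex) Sum.inr_injective
  have hvertex : {v | Nontrivial (D.vertexGroup v)}.Finite :=
    Finite.of_injective (Sum.inl : _ → D.FactorIndex) Sum.inl_injective
  have := finite_dihedral
  have hquot : Finite (Mhat ⧸ S) :=
    finite_of_almost_equivariant (Set.toFinite {tau, nu})
      (isPretransitive_quotient_of_isComplement' hS.isComplement'_s19) D.path_injective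
      (D.finite_path_smul_ne isAmalgam_dihedral hvertex) finite_That_inf_conj_omega
  exact hquot.not_infinite hS.infinite_quotient

theorem nonempty_factor_mulEquiv (hS : IsNeumann S)
    (D : SchreierData dihedral (Subgroup.zpowers sigma) q₀) (x : D.FactorIndex) :
    Nonempty (D.Factor x ≃* Multiplicative (ZMod 2)) ∨
      Nonempty (D.Factor x ≃* Multiplicative (ZMod 3)) ∨
      Nonempty (D.Factor x ≃* Multiplicative ℤ) := by
  match x with
  | .inl ⟨⟨b, o⟩, hv⟩ =>
    have hcyc := (hS.stabilizer_dihedral b (D.rep b o)).resolve_left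
      (not_subsingleton_iff_nontrivial.2 hv)
    cases b
    · exact .inr (.inl hcyc)
    · exact .inl hcyc
  | .inr _ => exact .inr (.inr ⟨FreeGroup.mulEquivIntOfUnique⟩)

end IsNeumann

theorem neumann_free_product_structure_general (Shat : Subgroup Mhat) (h1 : IsNeumann Shat) :
    ∃ (ι : Type) (H : ι → Type) (inst : ∀ i, Group (H i)),
      letI := inst
      Infinite ι ∧
      (∀ i, Nonempty (H i ≃* Multiplicative (ZMod 2)) ∨
        Nonempty (H i ≃* Multiplicative (ZMod 3)) ∨
        Nonempty (H i ≃* Multiplicative ℤ)) ∧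
      Nonempty (↥Shat ≃* Monoid.CoprodI H) := by
  obtain ⟨D⟩ := exists_schreierData isAmalgam_dihedral h1.stabilizer_zpowers_sigma
    ((1 : Mhat) : Mhat ⧸ Shat)
  obtain ⟨e⟩ := D.nonempty_stabilizer_mulEquiv isAmalgam_dihedral
  exact ⟨D.FactorIndex, D.Factor, inferInstance, h1.infinite_factorIndex D,
    h1.nonempty_factor_mulEquiv D,
    ⟨(MulEquiv.subgroupCongr (MulAction.stabilizer_quotient Shat).symm).trans
      (e.trans D.freeProductEquiv)⟩⟩

/-- If Ŝ is a Neumann subgroup of M̂ = PGL(2,ℤ) not contained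
in M = PSL(2,ℤ), then Ŝ is isomorphic to a free product of infinitely many
groups, each cyclic of order 2, cyclic of order 3, or infinite cyclic. -/
theorem neumann_free_product_structure
    (Shat : Subgroup Mhat) (h1 : IsNeumann Shat) (h2 : ¬ Shat ≤ Msub) :
    ∃ (ι : Type) (H : ι → Type) (inst : ∀ i, Group (H i)),
      letI := inst
      Infinite ι ∧
      (∀ i, Nonempty (H i ≃* Multiplicative (ZMod 2)) ∨
        Nonempty (H i ≃* Multiplicative (ZMod 3)) ∨
        Nonempty (H i ≃* Multiplicative ℤ)) ∧
      Nonempty (↥Shat ≃* Monoid.CoprodI H) :=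
  neumann_free_product_structure_general Shat h1
end
end
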